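/- Assume α > 1 (so that E[X] < ∞). Then there exists a constant ρ_α ∈ (0,∞), depending only on α, such that v_N · log₂ N / c_N → ρ_α as N → ∞; equivalently, v_N ~ ρ_α c_N / log₂ N. -/

import Mathlib

open MeasureTheory ProbabilityTheory Real Filter Set

noncomputable section

/-- One step of the `N`-BRW: each of the `N` particles branches into two, the children jump
according to `jump`, and only the `N` right-most particles are kept; the result is the
sorted (ascending) vector of the `N` retained positions. -/
def brwStep (N : ℕ) (pos : Fin N → ℝ) (jump : Fin N → Fin 2 → ℝ) : Fin N → ℝ := fun i =>
  (((Finset.univ : Finset (Fin N × Fin 2)).val.map fun p => pos p.1 + jump p.1 p.2).sort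
      (· ≤ ·)).getD (N + i) 0

/-- The `N`-BRW started from the sorted configuration `x0`, driven by the jumps `jump`:
`brw N x0 jump n i` is the position `X_{i+1}(n)` of the `(i+1)`-th lowest particle at time `n`. -/
def brw (N : ℕ) (x0 : Fin N → ℝ) (jump : ℕ → Fin N → Fin 2 → ℝ) : ℕ → Fin N → ℝ
  | 0 => x0
  | n + 1 => brwStep N (brw N x0 jump n) (jump n)

/-- Position `X_N(n)` of the right-most particle of the `N`-BRW started at the origin. -/
def brwMax (N : ℕ) (jump : ℕ → Fin N → Fin 2 → ℝ) (n : ℕ) : ℝ :=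
  ⨆ i, brw N (fun _ => 0) jump n i

/-- Position `X_1(n)` of the left-most particle of the `N`-BRW started at the origin. -/
def brwMin (N : ℕ) (jump : ℕ → Fin N → Fin 2 → ℝ) (n : ℕ) : ℝ :=
  ⨅ i, brw N (fun _ => 0) jump n i

/-- The tail `P(X > x) = 1/h(x)` of the random variable `X` under `P`. -/
def tail {Ω : Type*} [MeasurableSpace Ω] (P : Measure Ω) (X : Ω → ℝ) (x : ℝ) : ℝ :=
  (P {ω | x < X ω}).toReal

/-- Generalized inverse `h⁻¹(y)` of `h(x) = 1 / P(X > x)`. -/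
def hinv {Ω : Type*} [MeasurableSpace Ω] (P : Measure Ω) (X : Ω → ℝ) (y : ℝ) : ℝ :=
  sInf {x : ℝ | 0 ≤ x ∧ tail P X x ≤ y⁻¹}

/-- The scaling sequence `c_N = h⁻¹(2 N log₂ N)`. -/
def cN {Ω : Type*} [MeasurableSpace Ω] (P : Measure Ω) (X : Ω → ℝ) (N : ℕ) : ℝ :=
  hinv P X (2 * N * Real.logb 2 N)

/-!
On the scale `c_N`, only a bounded number of the jumps made during `log₂ N` generations matter. Cut
time into blocks of about `log₂ N / m` generations and keep only the largest jump of each block.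

*Lower bound.* The descendants of a particle that made a big jump occupy all `N` places after the
`log₂ N` generations it takes their number to reach `N`, so block maxima that are more than that far
apart can be added up.

*Upper bound.* Follow the ancestral line of a particle. Jumps below a small multiple of `c_N` add up
to little, by an exponential moment bound over all lines. A larger jump made within slightly less
than `log₂ N` generations of another one on the same line is rare, since an ancestor has fewer than
`N` descendants in that time, and the total of such jumps is negligible. The remaining jumps are
more than that many generations apart.

After division by `c_N`, the block maxima converge to Fréchet variables, under a coupling through
quantile functions. The two bounds then differ only by factors that tend to `1` as `m → ∞`, and the
limit is the supremum of the lower ones.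
-/

/-! ### The delayed max-plus recursion -/

/-- The largest total of `x` over subsets of `{0, …, k - 1}` any two elements of which are more
than `d` apart, computed by deciding whether the last index is used. It models the record of the
`N`-BRW when a big jump can only be built upon `d` steps after the previous one. -/
def delayedMax (d : ℕ) (x : ℕ → ℝ) : ℕ → ℝ
  | 0 => 0
  | k + 1 => max (delayedMax d x k) (delayedMax d x (k - d) + x k)
termination_by k => k
decreasing_by all_goals omega

section DelayedMax

variable {d k : ℕ} {x : ℕ → ℝ}

@[simp]
lemma delayedMax_zero (d : ℕ) (x : ℕ → ℝ) : delayedMax d x 0 = 0 := by rw [delayedMax]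

lemma delayedMax_succ (d : ℕ) (x : ℕ → ℝ) (k : ℕ) :
    delayedMax d x (k + 1) = max (delayedMax d x k) (delayedMax d x (k - d) + x k) := by
  rw [delayedMax]

lemma delayedMax_add_le_delayedMax_succ (d : ℕ) (x : ℕ → ℝ) (k : ℕ) :
    delayedMax d x (k - d) + x k ≤ delayedMax d x (k + 1) :=
  (le_max_right _ _).trans_eq (delayedMax_succ d x k).symm

lemma monotone_delayedMax (d : ℕ) (x : ℕ → ℝ) : Monotone (delayedMax d x) :=
  monotone_nat_of_le_succ fun k => (le_max_left _ _).trans_eq (delayedMax_succ d x k).symm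

lemma delayedMax_nonneg (d : ℕ) (x : ℕ → ℝ) (k : ℕ) : 0 ≤ delayedMax d x k :=
  (delayedMax_zero d x).ge.trans (monotone_delayedMax d x k.zero_le)

lemma delayedMax_induction (d : ℕ) {p : ℕ → Prop} (zero : p 0)
    (succ : ∀ k, p k → p (k - d) → p (k + 1)) (k : ℕ) : p k := by
  induction k using Nat.strong_induction_on with
  | _ k ih =>
    cases k with
    | zero => exact zero
    | succ k => exact succ k (ih k (by omega)) (ih (k - d) (by omega))

lemma delayedMax_le_sum (d : ℕ) (x : ℕ → ℝ) (k : ℕ) :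
    delayedMax d x k ≤ ∑ i ∈ Finset.range k, max (x i) 0 := by
  induction k with
  | zero => simp
  | succ k ih =>
    rw [delayedMax_succ, Finset.sum_range_succ]
    have hdelay := monotone_delayedMax d x (Nat.sub_le k d)
    have hpos := le_max_right (x k) 0
    have hle := le_max_left (x k) 0
    apply max_le <;> linarith

lemma delayedMax_const_mul (d : ℕ) (x : ℕ → ℝ) {c : ℝ} (hc : 0 ≤ c) (k : ℕ) :
    delayedMax d (fun i => c * x i) k = c * delayedMax d x k := by
  induction k using delayedMax_induction d with
  | zero => simp
  | succ k ih ih' =>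
    rw [delayedMax_succ, delayedMax_succ, ih, ih', ← mul_add, mul_max_of_nonneg _ _ hc]

lemma delayedMax_congr {y : ℕ → ℝ} (h : ∀ i < k, x i = y i) :
    delayedMax d x k = delayedMax d y k := by
  induction k using delayedMax_induction d with
  | zero => simp
  | succ k ih ih' =>
    rw [delayedMax_succ, delayedMax_succ, ih fun i hi => h i (by omega),
      ih' fun i hi => h i (by omega), h k (by omega)]

lemma delayedMax_add_le (d : ℕ) (x : ℕ → ℝ) (k n : ℕ) :
    delayedMax d x (k + n) ≤ delayedMax d x k + delayedMax d (fun i => x (k + i)) n := by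
  induction n using delayedMax_induction d with
  | zero => simp
  | succ n ih ih' =>
    rw [← add_assoc, delayedMax_succ, delayedMax_succ, ← max_add_add_left, ← add_assoc]
    refine max_le_max ih (add_le_add_left ?_ _)
    rcases le_total d n with hdn | hnd
    · rwa [Nat.add_sub_assoc hdn]
    · rw [Nat.sub_eq_zero_of_le hnd, delayedMax_zero, add_zero]
      exact monotone_delayedMax d x (by omega)

lemma add_le_delayedMax_add (d : ℕ) (x : ℕ → ℝ) (n k : ℕ) :
    delayedMax d x n + delayedMax d (fun i => x (n + d + i)) k ≤ delayedMax d x (n + d + k) := by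
  induction k using delayedMax_induction d with
  | zero => simpa using monotone_delayedMax d x (Nat.le_add_right n d)
  | succ k ih ih' =>
    rw [← add_assoc, delayedMax_succ, delayedMax_succ, ← max_add_add_left, ← add_assoc]
    refine max_le_max ih (add_le_add_left ?_ _)
    rcases le_total d k with hdk | hkd
    · rwa [Nat.add_sub_assoc hdk]
    · rw [Nat.sub_eq_zero_of_le hkd, delayedMax_zero, add_zero]
      exact monotone_delayedMax d x (by omega)

lemma delayedMax_mul_le_sum (d k : ℕ) (x : ℕ → ℝ) (j : ℕ) :
    delayedMax d x (j * k) ≤ ∑ i ∈ Finset.range j, delayedMax d (fun r => x (i * k + r)) k := by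
  induction j with
  | zero => simp
  | succ j ih =>
    rw [Finset.sum_range_succ, Nat.succ_mul]
    exact (delayedMax_add_le d x (j * k) k).trans (add_le_add_left ih _)

lemma sum_le_delayedMax_mul (d k : ℕ) (x : ℕ → ℝ) (j : ℕ) :
    ∑ i ∈ Finset.range j, delayedMax d (fun r => x (i * (k + d) + r)) k
      ≤ delayedMax d x (j * (k + d)) := by
  have hsum : ∀ j, ∑ i ∈ Finset.range (j + 1), delayedMax d (fun r => x (i * (k + d) + r)) k
      ≤ delayedMax d x (j * (k + d) + k) := by
    intro j
    induction j with
    | zero => simp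
    | succ j ih =>
      rw [Finset.sum_range_succ]
      have hblock := add_le_delayedMax_add d x (j * (k + d) + k) k
      rw [show j * (k + d) + k + d = (j + 1) * (k + d) by ring] at hblock
      linarith
  cases j with
  | zero => simp
  | succ j => exact (hsum j).trans (monotone_delayedMax d x (by rw [Nat.succ_mul]; omega))

/-- Before time `d + 1` only one index can be used. -/
lemma delayedMax_le_of_le {a : ℝ} {n : ℕ} (ha : 0 ≤ a) (hx : ∀ i < n, x i ≤ a) (hn : n ≤ d + 1) :
    delayedMax d x n ≤ a := by
  induction n with
  | zero => simpa using ha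
  | succ n ih =>
    rw [delayedMax_succ, Nat.sub_eq_zero_of_le (by omega), delayedMax_zero, zero_add]
    exact max_le (ih (fun i hi => hx i (by omega)) (by omega)) (hx n n.lt_succ_self)

lemma continuous_delayedMax (d k : ℕ) : Continuous fun x : ℕ → ℝ => delayedMax d x k := by
  induction k using delayedMax_induction d with
  | zero => simpa only [delayedMax_zero] using continuous_const
  | succ k ih ih' =>
    simp only [delayedMax_succ]
    exact ih.max (ih'.add (continuous_apply k))

lemma measurable_delayedMax (d k : ℕ) : Measurable fun x : ℕ → ℝ => delayedMax d x k :=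
  (continuous_delayedMax d k).measurable

lemma integrable_delayedMax {Ω : Type*} [MeasurableSpace Ω] {P : Measure Ω} {M : ℕ → Ω → ℝ}
    (hM : ∀ i, Measurable (M i)) (hint : ∀ i, Integrable (M i) P) (d k : ℕ) :
    Integrable (fun ω => delayedMax d (fun i => M i ω) k) P := by
  refine (integrable_finsetSum (Finset.range k) fun i _ => (hint i).pos_part).mono'
    ((measurable_delayedMax d k).comp (measurable_pi_lambda _ hM)).aestronglyMeasurable
    (.of_forall fun ω => ?_)
  rw [Real.norm_of_nonneg (delayedMax_nonneg _ _ _)]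
  exact delayedMax_le_sum d _ k

end DelayedMax

/-- The maximum of `x` over the `k`-th block of length `l`. -/
def blockMax (l : ℕ) (x : ℕ → ℝ) (k : ℕ) : ℝ := ⨆ r : Fin l, x (k * l + r)

section BlockMax

variable {l : ℕ}

lemma le_blockMax (x : ℕ → ℝ) {k n : ℕ} (hkn : k * l ≤ n) (hnk : n < (k + 1) * l) :
    x n ≤ blockMax l x k := by
  obtain ⟨r, rfl⟩ := Nat.exists_eq_add_of_le hkn
  rw [Nat.succ_mul] at hnk
  exact le_ciSup (f := fun r : Fin l => x (k * l + r)) (Set.finite_range _).bddAbove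
    ⟨r, by omega⟩

lemma exists_blockMax_eq (hl : 0 < l) (x : ℕ → ℝ) (k : ℕ) :
    ∃ n, k * l ≤ n ∧ n < (k + 1) * l ∧ blockMax l x k = x n := by
  have : Nonempty (Fin l) := ⟨⟨0, hl⟩⟩
  obtain ⟨r, hr⟩ := exists_eq_ciSup_of_finite (f := fun r : Fin l => x (k * l + r))
  exact ⟨k * l + r, by omega, by rw [Nat.succ_mul]; omega, hr.symm⟩

lemma delayedMax_blockMax_le (hl : 0 < l) {d D : ℕ} (hD : D ≤ d * l) (x : ℕ → ℝ) (k : ℕ) :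
    delayedMax d (blockMax l x) k ≤ delayedMax D x (k * l) := by
  induction k using delayedMax_induction d with
  | zero => simp
  | succ k ih ih' =>
    rw [delayedMax_succ]
    refine max_le (ih.trans (monotone_delayedMax D x (Nat.mul_le_mul_right _ k.le_succ))) ?_
    obtain ⟨n, hkn, hnk, hmax⟩ := exists_blockMax_eq hl x k
    calc delayedMax d (blockMax l x) (k - d) + blockMax l x k
        ≤ delayedMax D x (n - D) + x n := by
          rw [hmax]
          refine add_le_add_left (ih'.trans (monotone_delayedMax D x ?_)) _
          rw [Nat.sub_mul]
          omega
      _ ≤ delayedMax D x (n + 1) := delayedMax_add_le_delayedMax_succ D x n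
      _ ≤ delayedMax D x ((k + 1) * l) := monotone_delayedMax D x hnk

/-- Indices whose distance exceeds `(d + 1) * l` lie in blocks more than `d` apart. -/
lemma delayedMax_le_delayedMax_blockMax {d D : ℕ} (hD : (d + 1) * l ≤ D) (x : ℕ → ℝ) {k n : ℕ}
    (hn : n ≤ k * l) : delayedMax D x n ≤ delayedMax d (blockMax l x) k := by
  induction n using delayedMax_induction D generalizing k with
  | zero => simpa using delayedMax_nonneg _ _ _
  | succ n ih ih' =>
    have hl : 0 < l := Nat.pos_of_ne_zero (by rintro rfl; omega)
    set b := n / l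
    have hbn : b * l ≤ n := Nat.div_mul_le_self n l
    have hnb : n < (b + 1) * l := by rw [mul_comm]; exact Nat.lt_mul_div_succ n hl
    have hbk : b + 1 ≤ k := (Nat.div_lt_iff_lt_mul hl).2 hn
    have hdelay : n - D ≤ (b - d) * l := by
      rw [Nat.sub_mul]
      rw [Nat.succ_mul] at hD hnb
      omega
    rw [delayedMax_succ]
    refine max_le (ih (by omega)) ?_
    calc delayedMax D x (n - D) + x n
        ≤ delayedMax d (blockMax l x) (b - d) + blockMax l x b :=
          add_le_add (ih' hdelay) (le_blockMax x hbn hnb)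
      _ ≤ delayedMax d (blockMax l x) (b + 1) := delayedMax_add_le_delayedMax_succ _ _ _
      _ ≤ delayedMax d (blockMax l x) k := monotone_delayedMax _ _ hbk

end BlockMax

/-! ### Genealogy of the `N`-BRW -/

/-- The jumps driving an `N`-BRW: `J n i j` is the jump, at time `n`, of the `j`-th child of the
particle of rank `i`. -/
abbrev JumpArray (N : ℕ) := ℕ → Fin N → Fin 2 → ℝ

section Genealogy

variable {N : ℕ}

/-- The positions of the `2N` children in one step of the `N`-BRW, before selection. -/
def offspring (pos : Fin N → ℝ) (jump : Fin N → Fin 2 → ℝ) (p : Fin N × Fin 2) : ℝ :=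
  pos p.1 + jump p.1 p.2

/-- The index, in a family `y` of `2N` positions, of the `i`-th lowest among the `N` largest ones.
Ties are broken by `Tuple.sort`. -/
def survivor (y : Fin N × Fin 2 → ℝ) (i : Fin N) : Fin N × Fin 2 :=
  finProdFinEquiv.symm (Tuple.sort (y ∘ finProdFinEquiv.symm) ⟨N + i, by omega⟩)

lemma survivor_injective (y : Fin N × Fin 2 → ℝ) : Function.Injective (survivor y) := by
  intro i j h
  have hij := (Tuple.sort (y ∘ finProdFinEquiv.symm)).injective (finProdFinEquiv.symm.injective h)
  simpa [Fin.ext_iff] using hij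

lemma sort_map_univ_eq_ofFn (y : Fin N × Fin 2 → ℝ) :
    ((Finset.univ : Finset (Fin N × Fin 2)).val.map y).sort (· ≤ ·) =
      List.ofFn ((y ∘ finProdFinEquiv.symm) ∘ Tuple.sort (y ∘ finProdFinEquiv.symm)) := by
  refine List.Perm.eq_of_sortedLE (Multiset.pairwise_sort _ _).sortedLE
    (Tuple.monotone_sort (y ∘ finProdFinEquiv.symm)).sortedLE_ofFn ?_
  have huniv := Finset.map_univ_equiv
    ((Tuple.sort (y ∘ finProdFinEquiv.symm)).trans finProdFinEquiv.symm)
  rw [← Multiset.coe_eq_coe, Multiset.sort_eq, List.ofFn_eq_map, ← Multiset.map_coe, ← huniv,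
    Finset.map_val, Multiset.map_map]
  rfl

lemma brwStep_eq_offspring_survivor (pos : Fin N → ℝ) (jump : Fin N → Fin 2 → ℝ) (i : Fin N) :
    brwStep N pos jump i = offspring pos jump (survivor (offspring pos jump) i) := by
  change ((Finset.univ.val.map (offspring pos jump)).sort (· ≤ ·)).getD (N + i) 0 = _
  rw [sort_map_univ_eq_ofFn,
    List.getD_eq_getElem _ _ (by simp only [List.length_ofFn]; omega), List.getElem_ofFn]
  rfl

lemma le_survivor_of_notMem_range {y : Fin N × Fin 2 → ℝ} {p : Fin N × Fin 2}
    (hp : p ∉ Set.range (survivor y)) (i : Fin N) : y p ≤ y (survivor y i) := by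
  set f := y ∘ finProdFinEquiv.symm
  obtain ⟨k, rfl⟩ := ((Tuple.sort f).trans finProdFinEquiv.symm).surjective p
  have hkN : k.1 < N := by
    by_contra! hNk
    refine hp ⟨⟨k.1 - N, by omega⟩, congrArg (fun m => finProdFinEquiv.symm (Tuple.sort f m)) ?_⟩
    ext
    simp only
    omega
  exact Tuple.monotone_sort f (a := k) (b := ⟨N + i, by omega⟩) (by simp only [Fin.le_def]; omega)

lemma measurable_tupleSort (n : ℕ) :
    Measurable[_, ⊤] fun f : Fin n → ℝ => Tuple.sort f := by
  let _ : MeasurableSpace (Equiv.Perm (Fin n)) := ⊤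
  have : MeasurableSingletonClass (Equiv.Perm (Fin n)) := ⟨fun _ => trivial⟩
  refine measurable_to_countable' fun σ => ?_
  have hpreimage : (fun f : Fin n → ℝ => Tuple.sort f) ⁻¹' {σ} = {f | (∀ i j, i ≤ j →
      f (σ i) ≤ f (σ j)) ∧ ∀ i j, i < j → f (σ i) = f (σ j) → σ i < σ j} := by
    ext f
    rw [mem_preimage, mem_singleton_iff, eq_comm, Tuple.eq_sort_iff]
    rfl
  rw [hpreimage]
  measurability

lemma measurable_survivor :
    Measurable (survivor : (Fin N × Fin 2 → ℝ) → Fin N → Fin N × Fin 2) := by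
  let _ : MeasurableSpace (Equiv.Perm (Fin (N * 2))) := ⊤
  have hperm : Measurable fun (σ : Equiv.Perm (Fin (N * 2))) (i : Fin N) =>
      (finProdFinEquiv.symm (σ ⟨N + i, by omega⟩) : Fin N × Fin 2) := measurable_from_top
  exact hperm.comp ((measurable_tupleSort _).comp
    (measurable_pi_lambda _ fun _ => measurable_pi_apply _))

lemma measurable_apply_of_countable {ι β Ω : Type*} [Countable ι] [MeasurableSpace ι]
    [MeasurableSingletonClass ι] [MeasurableSpace β] [MeasurableSpace Ω] {f : Ω → ι → β}
    {g : Ω → ι} (hf : ∀ i, Measurable fun ω => f ω i) (hg : Measurable g) :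
    Measurable fun ω => f ω (g ω) :=
  (measurable_from_prod_countable_left fun i => measurable_pi_apply i :
    Measurable fun q : (ι → β) × ι => q.1 q.2).comp ((measurable_pi_lambda _ hf).prodMk hg)

section Brw

variable (x₀ : Fin N → ℝ) (J : JumpArray N)

/-- The parent at time `n`, and the index among its two children, of the particle of rank `i` at
time `n + 1`. -/
def parent (n : ℕ) : Fin N → Fin N × Fin 2 := survivor (offspring (brw N x₀ J n) (J n))

lemma parent_injective (n : ℕ) : Function.Injective (parent x₀ J n) := survivor_injective _

lemma brw_succ (n : ℕ) (i : Fin N) :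
    brw N x₀ J (n + 1) i = offspring (brw N x₀ J n) (J n) (parent x₀ J n i) :=
  brwStep_eq_offspring_survivor _ _ _

lemma offspring_le_brw_succ {n : ℕ} {p : Fin N × Fin 2} (hp : p ∉ Set.range (parent x₀ J n))
    (i : Fin N) : offspring (brw N x₀ J n) (J n) p ≤ brw N x₀ J (n + 1) i :=
  (le_survivor_of_notMem_range hp i).trans_eq (brw_succ x₀ J n i).symm

lemma measurable_offspring {n : ℕ} (h : Measurable fun J : JumpArray N => brw N x₀ J n) :
    Measurable fun J : JumpArray N => offspring (brw N x₀ J n) (J n) :=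
  measurable_pi_lambda _ fun p => ((measurable_pi_apply p.1).comp h).add (by fun_prop)

lemma measurable_brw (n : ℕ) : Measurable fun J : JumpArray N => brw N x₀ J n := by
  induction n with
  | zero => exact measurable_const
  | succ n ih =>
    have hoff := measurable_offspring x₀ ih
    refine measurable_pi_lambda _ fun i => ?_
    simp only [brw_succ]
    exact measurable_apply_of_countable (fun p => (measurable_pi_apply p).comp hoff)
      ((measurable_pi_apply i).comp (measurable_survivor.comp hoff))

lemma measurable_parent (n : ℕ) : Measurable fun J : JumpArray N => parent x₀ J n :=
  measurable_survivor.comp (measurable_offspring x₀ (measurable_brw x₀ n))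

lemma dependsOn_brw (n : ℕ) : DependsOn (fun J : JumpArray N => brw N x₀ J n) (Iio n) := by
  induction n with
  | zero => exact fun _ _ _ => rfl
  | succ n ih =>
    exact fun J J' h => congrArg₂ (brwStep N) (ih fun k hk => h k (Nat.lt_succ_of_lt hk))
      (h n n.lt_succ_self)

lemma dependsOn_parent (n : ℕ) :
    DependsOn (fun J : JumpArray N => parent x₀ J n) (Iio (n + 1)) := fun _ _ h =>
  congrArg survivor (congrArg₂ offspring
    (dependsOn_brw x₀ n fun k hk => h k (Nat.lt_succ_of_lt hk)) (h n n.lt_succ_self))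

variable {J}

lemma brw_nonneg (hx : ∀ i, 0 ≤ x₀ i) (hJ : ∀ n i j, 0 ≤ J n i j) (n : ℕ) (i : Fin N) :
    0 ≤ brw N x₀ J n i := by
  induction n generalizing i with
  | zero => exact hx i
  | succ n ih =>
    rw [brw_succ]
    exact add_nonneg (ih _) (hJ _ _ _)

lemma min_two_mul_card_le_card (hJ : ∀ n i j, 0 ≤ J n i j) (n : ℕ) (y : ℝ) :
    min N (2 * (Finset.univ.filter fun i => y ≤ brw N x₀ J n i).card) ≤
      (Finset.univ.filter fun i => y ≤ brw N x₀ J (n + 1) i).card := by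
  by_cases hall : ∀ i, y ≤ brw N x₀ J (n + 1) i
  · simp [Finset.filter_true_of_mem fun i _ => hall i]
  obtain ⟨i₀, hi₀⟩ := not_forall.1 hall
  set above := Finset.univ.filter fun i => y ≤ brw N x₀ J n i
  set above' := Finset.univ.filter fun i => y ≤ brw N x₀ J (n + 1) i
  have hsub : above ×ˢ (Finset.univ : Finset (Fin 2)) ⊆ above'.image (parent x₀ J n) := by
    intro p hp
    simp only [above, Finset.mem_product, Finset.mem_filter, Finset.mem_univ, true_and,
      and_true] at hp
    have hyp : y ≤ offspring (brw N x₀ J n) (J n) p := le_add_of_le_of_nonneg hp (hJ _ _ _)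
    obtain ⟨i, rfl⟩ : p ∈ Set.range (parent x₀ J n) := by
      by_contra hp
      exact hi₀ (hyp.trans (offspring_le_brw_succ x₀ J hp i₀))
    refine Finset.mem_image_of_mem _ (Finset.mem_filter.2 ⟨Finset.mem_univ _, ?_⟩)
    rwa [brw_succ]
  calc min N (2 * above.card) ≤ (above ×ˢ (Finset.univ : Finset (Fin 2))).card := by
        rw [Finset.card_product, Finset.card_fin, mul_comm above.card]
        exact min_le_right _ _
    _ ≤ (above'.image (parent x₀ J n)).card := Finset.card_le_card hsub
    _ = above'.card := Finset.card_image_of_injective _ (parent_injective x₀ J n)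

end Brw

section BrwMax

lemma le_brwMax (J : JumpArray N) (n : ℕ) (i : Fin N) :
    brw N (fun _ => 0) J n i ≤ brwMax N J n :=
  le_ciSup (f := fun i => brw N (fun _ => 0) J n i) (Set.finite_range _).bddAbove i

lemma brwMin_le (J : JumpArray N) (n : ℕ) (i : Fin N) :
    brwMin N J n ≤ brw N (fun _ => 0) J n i :=
  ciInf_le (f := fun i => brw N (fun _ => 0) J n i) (Set.finite_range _).bddBelow i

/-- The largest jump at time `n`. -/
def stepMax (J : JumpArray N) (n : ℕ) : ℝ := ⨆ p : Fin N × Fin 2, J n p.1 p.2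

lemma le_stepMax (J : JumpArray N) (n : ℕ) (p : Fin N × Fin 2) : J n p.1 p.2 ≤ stepMax J n :=
  le_ciSup (f := fun p : Fin N × Fin 2 => J n p.1 p.2) (Set.finite_range _).bddAbove p

variable [NeZero N] {J : JumpArray N}

lemma exists_stepMax_eq (J : JumpArray N) (n : ℕ) :
    ∃ p : Fin N × Fin 2, stepMax J n = J n p.1 p.2 :=
  (exists_eq_ciSup_of_finite (f := fun p : Fin N × Fin 2 => J n p.1 p.2)).imp fun _ => Eq.symm

lemma exists_brwMax_eq (J : JumpArray N) (n : ℕ) : ∃ i, brwMax N J n = brw N (fun _ => 0) J n i :=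
  (exists_eq_ciSup_of_finite (f := fun i => brw N (fun _ => 0) J n i)).imp fun _ => Eq.symm

@[simp]
lemma brwMax_zero (J : JumpArray N) : brwMax N J 0 = 0 := by simp [brwMax, brw]

lemma offspring_le_brwMax_succ (J : JumpArray N) (n : ℕ) (p : Fin N × Fin 2) :
    offspring (brw N (fun _ => 0) J n) (J n) p ≤ brwMax N J (n + 1) := by
  by_cases hp : p ∈ Set.range (parent (fun _ => 0) J n)
  · obtain ⟨i, rfl⟩ := hp
    rw [← brw_succ]
    exact le_brwMax J (n + 1) i
  · exact (offspring_le_brw_succ _ J hp 0).trans (le_brwMax J (n + 1) 0)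

lemma monotone_brwMax (hJ : ∀ n i j, 0 ≤ J n i j) : Monotone (brwMax N J) :=
  monotone_nat_of_le_succ fun n => ciSup_le fun i =>
    (le_add_of_nonneg_right (hJ n i 0)).trans (offspring_le_brwMax_succ J n (i, 0))

lemma brwMax_le_brwMin_add (hJ : ∀ n i j, 0 ≤ J n i j) {D : ℕ} (hD : N ≤ 2 ^ D) (n : ℕ) :
    brwMax N J n ≤ brwMin N J (n + D) := by
  set above : ℕ → Finset (Fin N) := fun r =>
    Finset.univ.filter fun i => brwMax N J n ≤ brw N (fun _ => 0) J (n + r) i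
  have hcard : ∀ r, min N (2 ^ r) ≤ (above r).card := by
    intro r
    induction r with
    | zero =>
      obtain ⟨i, hi⟩ := exists_brwMax_eq J n
      refine (min_le_right _ _).trans (Finset.card_pos.2 ⟨i, ?_⟩)
      simpa [above] using hi.le
    | succ r ih =>
      refine le_trans ?_ (min_two_mul_card_le_card _ hJ (n + r) (brwMax N J n))
      rw [pow_succ]
      change _ ≤ min N (2 * (above r).card)
      omega
  have huniv : above D = Finset.univ := Finset.eq_univ_of_card _ <|
    le_antisymm (Finset.card_le_univ _) <|
      (Fintype.card_fin N).trans_le <| (min_eq_left hD).symm.trans_le (hcard D)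
  refine le_ciInf fun i => ?_
  simpa [above] using huniv.ge (Finset.mem_univ i)

lemma delayedMax_stepMax_le_brwMax (hJ : ∀ n i j, 0 ≤ J n i j) {D : ℕ} (hD : N ≤ 2 ^ D) (n : ℕ) :
    delayedMax D (stepMax J) n ≤ brwMax N J n := by
  induction n using delayedMax_induction D with
  | zero => simp
  | succ n ih ih' =>
    rw [delayedMax_succ]
    refine max_le (ih.trans (monotone_brwMax hJ n.le_succ)) ?_
    obtain ⟨p, hp⟩ := exists_stepMax_eq J n
    have hpos : brwMax N J (n - D) ≤ brw N (fun _ => 0) J n p.1 := by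
      rcases le_total D n with hDn | hnD
      · have hmin := brwMax_le_brwMin_add hJ hD (n - D)
        rw [Nat.sub_add_cancel hDn] at hmin
        exact hmin.trans (brwMin_le J n p.1)
      · rw [Nat.sub_eq_zero_of_le hnD, brwMax_zero]
        exact brw_nonneg _ (fun _ => le_rfl) hJ n p.1
    rw [hp]
    exact (add_le_add_left (ih'.trans hpos) _).trans (offspring_le_brwMax_succ J n p)

end BrwMax

end Genealogy

/-! ### Decomposition of ancestral lines -/

section Lineage

variable {N : ℕ}

section LineageFold

variable {β : Type*} (x₀ : Fin N → ℝ) (J : JumpArray N) (init : β) (f : β → ℝ → β)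

/-- The result of folding `f`, from `init`, over the jumps made along the ancestral line of the
particle of rank `i` at time `n`. -/
def lineageFold : ℕ → Fin N → β
  | 0 => fun _ => init
  | n + 1 => fun i =>
      f (lineageFold n (parent x₀ J n i).1) (J n (parent x₀ J n i).1 (parent x₀ J n i).2)

lemma dependsOn_lineageFold (n : ℕ) :
    DependsOn (fun J : JumpArray N => lineageFold x₀ J init f n) (Iio n) := by
  induction n with
  | zero => exact fun _ _ _ => rfl
  | succ n ih =>
    intro J J' h
    ext1 i
    have hparent := dependsOn_parent x₀ n h
    have hfold := ih fun k hk => h k (Nat.lt_succ_of_lt hk)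
    simp only at hparent hfold
    simp only [lineageFold, hparent, hfold, h n n.lt_succ_self]

lemma measurable_lineageFold [MeasurableSpace β] {f : β → ℝ → β}
    (hf : Measurable (Function.uncurry f)) (n : ℕ) :
    Measurable fun J : JumpArray N => lineageFold x₀ J init f n := by
  induction n with
  | zero => exact measurable_const
  | succ n ih =>
    refine measurable_pi_lambda _ fun i => ?_
    have hparent : Measurable fun J : JumpArray N => parent x₀ J n i :=
      (measurable_pi_apply i).comp (measurable_parent x₀ n)
    refine hf.comp (Measurable.prodMk ?_ ?_)
    · exact measurable_apply_of_countable (fun i => (measurable_pi_apply i).comp ih) hparent.fst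
    · exact measurable_apply_of_countable (f := fun (J : JumpArray N) p => J n p.1 p.2)
        (fun p => by fun_prop) hparent

end LineageFold

variable (D : ℕ) (a : ℝ) (J : JumpArray N)

/-- The sum of the jumps of size at most `a` along the ancestral line of the particle of rank `i`
at time `n`. -/
def smallJumpSum (n : ℕ) (i : Fin N) : ℝ :=
  lineageFold (fun _ => 0) J 0 (fun s x => s + (Iic a).indicator id x) n i

/-- The number of generations since the last jump larger than `a` along the ancestral line of the
particle of rank `i` at time `n`; the ancestors at time `0` get age `D`. -/
def age (n : ℕ) (i : Fin N) : ℕ :=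
  lineageFold (fun _ => 0) J D (fun r x => if x ≤ a then r + 1 else 0) n i

/-- The sum of the jumps larger than `a`, along the ancestral line of the particle of rank `i` at
time `n`, that are made by particles of age at least `D`. -/
def matureJumpSum : ℕ → Fin N → ℝ
  | 0 => fun _ => 0
  | n + 1 => fun i => matureJumpSum n (parent (fun _ => 0) J n i).1 +
      if D ≤ age D a J n (parent (fun _ => 0) J n i).1 then
        (Ioi a).indicator id (J n (parent (fun _ => 0) J n i).1 (parent (fun _ => 0) J n i).2)
      else 0

/-- The sum of the jumps larger than `a` made at time `n` by all particles of age less than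
`D`. -/
def youngJumpSum (n : ℕ) : ℝ :=
  ∑ p : Fin N × Fin 2, if age D a J n p.1 < D then (Ioi a).indicator id (J n p.1 p.2) else 0

lemma smallJumpSum_succ (n : ℕ) (i : Fin N) : smallJumpSum a J (n + 1) i =
    smallJumpSum a J n (parent (fun _ => 0) J n i).1 + (Iic a).indicator id
      (J n (parent (fun _ => 0) J n i).1 (parent (fun _ => 0) J n i).2) := rfl

lemma age_succ (n : ℕ) (i : Fin N) : age D a J (n + 1) i =
    if J n (parent (fun _ => 0) J n i).1 (parent (fun _ => 0) J n i).2 ≤ a then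
      age D a J n (parent (fun _ => 0) J n i).1 + 1 else 0 := rfl

lemma dependsOn_smallJumpSum (n : ℕ) :
    DependsOn (fun J : JumpArray N => smallJumpSum a J n) (Iio n) :=
  dependsOn_lineageFold _ _ _ n

lemma dependsOn_age (n : ℕ) : DependsOn (fun J : JumpArray N => age D a J n) (Iio n) :=
  dependsOn_lineageFold _ _ _ n

lemma measurable_smallJumpSum (n : ℕ) :
    Measurable fun J : JumpArray N => smallJumpSum a J n :=
  measurable_lineageFold _ _ (f := fun s x => s + (Iic a).indicator id x)
    (measurable_fst.add ((measurable_id.indicator measurableSet_Iic).comp measurable_snd)) n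

lemma measurable_age (n : ℕ) : Measurable fun J : JumpArray N => age D a J n :=
  measurable_lineageFold _ _
    (Measurable.ite (measurableSet_Iic.preimage measurable_snd) (by fun_prop) measurable_const) n

variable {J}

lemma youngJumpSum_nonneg (hJ : ∀ n i j, 0 ≤ J n i j) (n : ℕ) : 0 ≤ youngJumpSum D a J n :=
  Finset.sum_nonneg fun _ _ => ite_nonneg (indicator_apply_nonneg fun _ => hJ _ _ _) le_rfl

lemma brw_le_smallJumpSum_add_matureJumpSum_add_sum (hJ : ∀ n i j, 0 ≤ J n i j) (n : ℕ)
    (i : Fin N) : brw N (fun _ => 0) J n i ≤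
      smallJumpSum a J n i + matureJumpSum D a J n i
        + ∑ k ∈ Finset.range n, youngJumpSum D a J k := by
  induction n generalizing i with
  | zero => simp [brw, smallJumpSum, matureJumpSum, lineageFold]
  | succ n ih =>
    rw [brw_succ, offspring, Finset.sum_range_succ, smallJumpSum_succ]
    simp only [matureJumpSum]
    set p := parent (fun _ => 0) J n i
    have hyoung : (if age D a J n p.1 < D then (Ioi a).indicator id (J n p.1 p.2) else 0) ≤
        youngJumpSum D a J n :=
      Finset.single_le_sum (f := fun p : Fin N × Fin 2 =>
        if age D a J n p.1 < D then (Ioi a).indicator id (J n p.1 p.2) else 0)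
        (fun q _ => ite_nonneg (indicator_apply_nonneg fun _ => hJ _ _ _) le_rfl)
        (Finset.mem_univ p)
    have hsplit : J n p.1 p.2 =
        (Iic a).indicator id (J n p.1 p.2) + (Ioi a).indicator id (J n p.1 p.2) := by
      rw [← compl_Iic, indicator_self_add_compl_apply, id]
    have := ih p.1
    split_ifs at hyoung ⊢ <;> linarith

/-- Jumps made at age at least `D` are more than `D` apart along each ancestral line. -/
lemma matureJumpSum_le_delayedMax (J : JumpArray N) (n : ℕ) (i : Fin N) :
    matureJumpSum D a J n i ≤ delayedMax D (stepMax J) (n - age D a J n i) := by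
  induction n generalizing i with
  | zero => simp [matureJumpSum]
  | succ n ih =>
    rw [age_succ]
    simp only [matureJumpSum]
    set p := parent (fun _ => 0) J n i
    have hp := ih p.1
    by_cases hsmall : J n p.1 p.2 ≤ a
    · simpa [indicator, hsmall.not_gt, hsmall] using hp
    rw [if_neg hsmall, indicator_of_mem (mem_Ioi.2 (not_le.1 hsmall)), id, Nat.sub_zero]
    split_ifs with hmature
    · calc matureJumpSum D a J n p.1 + J n p.1 p.2
          ≤ delayedMax D (stepMax J) (n - D) + stepMax J n :=
            add_le_add (hp.trans (monotone_delayedMax _ _ (by omega))) (le_stepMax J n p)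
        _ ≤ delayedMax D (stepMax J) (n + 1) := delayedMax_add_le_delayedMax_succ _ _ _
    · rw [add_zero]
      exact hp.trans (monotone_delayedMax _ _ (by omega))

lemma brwMax_le_iSup_smallJumpSum_add [NeZero N] (hJ : ∀ n i j, 0 ≤ J n i j) {l d k n : ℕ}
    (hn : n ≤ k * l) :
    brwMax N J n ≤ (⨆ i, smallJumpSum a J n i) + (delayedMax d (blockMax l (stepMax J)) k
      + ∑ t ∈ Finset.range n, youngJumpSum ((d + 1) * l) a J t) := by
  obtain ⟨i, hi⟩ := exists_brwMax_eq J n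
  have hmature : matureJumpSum ((d + 1) * l) a J n i ≤ delayedMax d (blockMax l (stepMax J)) k :=
    calc _ ≤ delayedMax ((d + 1) * l) (stepMax J) n :=
          (matureJumpSum_le_delayedMax _ a J n i).trans (monotone_delayedMax _ _ (Nat.sub_le _ _))
      _ ≤ _ := delayedMax_le_delayedMax_blockMax le_rfl _ hn
  rw [hi]
  linarith [brw_le_smallJumpSum_add_matureJumpSum_add_sum ((d + 1) * l) a hJ n i,
    le_ciSup (Finite.bddAbove_range fun i => smallJumpSum a J n i) i]

lemma sum_parent_le (x₀ : Fin N → ℝ) (J : JumpArray N) (n : ℕ) (φ : Fin N × Fin 2 → ENNReal) :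
    ∑ i, φ (parent x₀ J n i) ≤ ∑ p, φ p := by
  rw [← Finset.sum_image (f := φ) (parent_injective x₀ J n).injOn]
  exact Finset.sum_le_sum_of_subset (Finset.subset_univ _)

lemma sum_exp_smallJumpSum_succ_le (c : ℝ) (J : JumpArray N) (n : ℕ) :
    ∑ i, ENNReal.ofReal (exp (c * smallJumpSum a J (n + 1) i)) ≤
      ∑ p : Fin N × Fin 2, ENNReal.ofReal (exp (c * smallJumpSum a J n p.1)) *
        ENNReal.ofReal (exp (c * (Iic a).indicator id (J n p.1 p.2))) := by
  refine le_of_eq_of_le (Finset.sum_congr rfl fun i _ => ?_) (sum_parent_le (fun _ => 0) J n _)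
  rw [← ENNReal.ofReal_mul (exp_nonneg _), ← exp_add, ← mul_add, smallJumpSum_succ]

lemma sum_age_succ_eq_succ_le (r : ℕ) (J : JumpArray N) (n : ℕ) :
    ∑ i, (if age D a J (n + 1) i = r + 1 then 1 else 0 : ENNReal) ≤
      2 * ∑ i, if age D a J n i = r then 1 else 0 := by
  calc ∑ i, (if age D a J (n + 1) i = r + 1 then 1 else 0 : ENNReal)
      ≤ ∑ i, if age D a J n (parent (fun _ => 0) J n i).1 = r then 1 else 0 := by
        refine Finset.sum_le_sum fun i _ => ?_
        rw [age_succ]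
        split_ifs <;> simp_all
    _ ≤ ∑ p : Fin N × Fin 2, if age D a J n p.1 = r then 1 else 0 :=
        sum_parent_le (fun _ => 0) J n fun p => if age D a J n p.1 = r then 1 else 0
    _ = 2 * ∑ i, if age D a J n i = r then 1 else 0 := by
        simp only [Fintype.sum_prod_type, Fin.sum_univ_two, Finset.mul_sum, two_mul]

lemma sum_age_succ_eq_zero_le (J : JumpArray N) (n : ℕ) :
    ∑ i, (if age D a J (n + 1) i = 0 then 1 else 0 : ENNReal) ≤
      ∑ p : Fin N × Fin 2, (Ioi a).indicator 1 (J n p.1 p.2) := by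
  refine le_trans (Finset.sum_le_sum fun i _ => ?_)
    (sum_parent_le (fun _ => 0) J n fun p => (Ioi a).indicator 1 (J n p.1 p.2))
  rw [age_succ, indicator_apply]
  split_ifs <;> simp_all

end Lineage

/-! ### Independent jumps -/

/-- The random variables `M i` are independent and all have law `μ`. -/
structure IsIID {Ω ι E : Type*} [MeasurableSpace Ω] [MeasurableSpace E] (P : Measure Ω)
    (M : ι → Ω → E) (μ : Measure E) : Prop where
  measurable : ∀ i, Measurable (M i)
  iIndepFun : iIndepFun M P
  map_eq : ∀ i, P.map (M i) = μ

namespace IsIID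

variable {Ω ι κ E F : Type*} [MeasurableSpace Ω] [MeasurableSpace E] [MeasurableSpace F]
  {P : Measure Ω} {M : ι → Ω → E} {μ : Measure E}

lemma precomp (hM : IsIID P M μ) {g : κ → ι} (hg : g.Injective) : IsIID P (fun k => M (g k)) μ :=
  ⟨fun _ => hM.measurable _, hM.iIndepFun.precomp hg, fun _ => hM.map_eq _⟩

lemma map_pi_eq_infinitePi (hM : IsIID P M μ) :
    P.map (fun ω i => M i ω) = Measure.infinitePi fun _ : ι => μ := by
  rw [hM.iIndepFun.map_fun_eq_infinitePi_map hM.measurable]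
  simp_rw [hM.map_eq]

lemma of_map_pi_eq_infinitePi [IsProbabilityMeasure P] [IsProbabilityMeasure μ]
    (hM : ∀ i, Measurable (M i))
    (hmap : P.map (fun ω i => M i ω) = Measure.infinitePi fun _ : ι => μ) : IsIID P M μ := by
  have hlaw : ∀ i, P.map (M i) = μ := fun i => by
    have heval := (measurePreserving_eval_infinitePi (fun _ : ι => μ) i).map_eq
    rwa [← hmap, Measure.map_map (measurable_pi_apply i) (measurable_pi_lambda _ hM)] at heval
  refine ⟨hM, ?_, hlaw⟩
  rw [iIndepFun_iff_map_fun_eq_infinitePi_map hM, hmap]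
  simp_rw [hlaw]

lemma comp_block [IsProbabilityMeasure P] [IsProbabilityMeasure μ] {M : ι × κ → Ω → E}
    (hM : IsIID P M μ) {f : (κ → E) → F} (hf : Measurable f) :
    IsIID P (fun i ω => f fun j => M (i, j) ω) ((Measure.infinitePi fun _ : κ => μ).map f) := by
  have := Measure.isProbabilityMeasure_map (μ := Measure.infinitePi fun _ : κ => μ) hf.aemeasurable
  refine of_map_pi_eq_infinitePi
    (fun i => hf.comp (measurable_pi_lambda _ fun j => hM.measurable _)) ?_
  have hfam : Measurable fun ω p => M p ω := measurable_pi_lambda _ hM.measurable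
  have hcurry := (MeasurableEquiv.curry ι κ E).measurable
  have hblock : Measurable fun (x : ι → κ → E) i => f (x i) :=
    measurable_pi_lambda _ fun i => hf.comp (measurable_pi_apply i)
  rw [← Measure.infinitePi_map_pi (μ := fun _ : ι => Measure.infinitePi fun _ : κ => μ)
      (f := fun _ => f) (fun _ => hf), ← Measure.infinitePi_map_curry (fun (_ : ι) (_ : κ) => μ),
    ← hM.map_pi_eq_infinitePi, Measure.map_map hcurry hfam,
    Measure.map_map hblock (hcurry.comp hfam)]
  rfl

lemma lintegral_comp (hM : IsIID P M μ) {f : E → ENNReal} (hf : Measurable f) (i : ι) :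
    ∫⁻ ω, f (M i ω) ∂P = ∫⁻ x, f x ∂μ := by
  rw [← hM.map_eq i, lintegral_map hf (hM.measurable i)]

lemma integrable {M : ι → Ω → ℝ} {μ : Measure ℝ} (hM : IsIID P M μ) (hμ : Integrable id μ) (i : ι) :
    Integrable (M i) P := by
  rw [← hM.map_eq i] at hμ
  exact hμ.comp_measurable (hM.measurable i)

end IsIID

lemma isIID_infinitePi (ι : Type*) {E : Type*} [MeasurableSpace E] (μ : Measure E)
    [IsProbabilityMeasure μ] : IsIID (Measure.infinitePi fun _ : ι => μ) (fun i x => x i) μ :=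
  .of_map_pi_eq_infinitePi measurable_pi_apply Measure.map_id

lemma injective_mul_add_fin (q : ℕ) : Function.Injective fun p : ℕ × Fin q => p.1 * q + p.2 := by
  intro p p' h
  have : NeZero q := ⟨(p.2.pos).ne'⟩
  exact (Nat.divModEquiv q).symm.injective h

/-- The expectation of `delayedMax d x k` when the entries of `x` are independent with law `μ`. -/
def meanDelayedMax (d k : ℕ) (μ : Measure ℝ) : ℝ :=
  ∫ x, delayedMax d x k ∂Measure.infinitePi fun _ : ℕ => μ

lemma meanDelayedMax_nonneg (d k : ℕ) (μ : Measure ℝ) : 0 ≤ meanDelayedMax d k μ :=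
  integral_nonneg fun x => delayedMax_nonneg d x k

section MeanDelayedMax

variable {Ω : Type*} [MeasurableSpace Ω] {P : Measure Ω} {M : ℕ → Ω → ℝ} {μ : Measure ℝ}

lemma IsIID.integral_delayedMax (hM : IsIID P M μ) (d k : ℕ) :
    ∫ ω, delayedMax d (fun i => M i ω) k ∂P = meanDelayedMax d k μ := by
  rw [meanDelayedMax, ← hM.map_pi_eq_infinitePi,
    integral_map (measurable_pi_lambda _ hM.measurable).aemeasurable
      (measurable_delayedMax d k).aestronglyMeasurable]

lemma IsIID.integrable_delayedMax (hM : IsIID P M μ) (hμ : Integrable id μ) (d k : ℕ) :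
    Integrable (fun ω => delayedMax d (fun i => M i ω) k) P :=
  _root_.integrable_delayedMax hM.measurable (hM.integrable hμ) d k

lemma IsIID.lintegral_delayedMax (hM : IsIID P M μ) (hμ : Integrable id μ) (d k : ℕ) :
    ∫⁻ ω, ENNReal.ofReal (delayedMax d (fun i => M i ω) k) ∂P =
      ENNReal.ofReal (meanDelayedMax d k μ) := by
  rw [← hM.integral_delayedMax, ofReal_integral_eq_lintegral_ofReal
    (hM.integrable_delayedMax hμ d k) (.of_forall fun ω => delayedMax_nonneg d _ k)]

lemma IsIID.shift (hM : IsIID P M μ) (n : ℕ) : IsIID P (fun i => M (n + i)) μ :=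
  hM.precomp (add_right_injective n)

lemma meanDelayedMax_mul_le [IsProbabilityMeasure μ] (hμ : Integrable id μ) (d k j : ℕ) :
    meanDelayedMax d (j * k) μ ≤ j * meanDelayedMax d k μ := by
  have hM := isIID_infinitePi ℕ μ
  calc meanDelayedMax d (j * k) μ
      ≤ ∫ x, ∑ i ∈ Finset.range j, delayedMax d (fun r => x (i * k + r)) k
          ∂Measure.infinitePi fun _ : ℕ => μ :=
        integral_mono (hM.integrable_delayedMax hμ d (j * k))
          (integrable_finsetSum _ fun i _ => (hM.shift (i * k)).integrable_delayedMax hμ d k)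
          fun x => delayedMax_mul_le_sum d k x j
    _ = ∑ i ∈ Finset.range j, ∫ x, delayedMax d (fun r => x (i * k + r)) k
          ∂Measure.infinitePi fun _ : ℕ => μ :=
        integral_finsetSum _ fun i _ => (hM.shift (i * k)).integrable_delayedMax hμ d k
    _ = j * meanDelayedMax d k μ := by simp [fun i => (hM.shift (i * k)).integral_delayedMax d k]

lemma meanDelayedMax_mono [IsProbabilityMeasure μ] (hμ : Integrable id μ) (d : ℕ) :
    Monotone fun k => meanDelayedMax d k μ := fun k k' hk =>
  have hM := isIID_infinitePi ℕ μ
  integral_mono (hM.integrable_delayedMax hμ d k) (hM.integrable_delayedMax hμ d k') fun x =>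
    monotone_delayedMax d x hk

lemma IsIID.tendsto_sum_delayedMax_div [IsProbabilityMeasure P] [IsProbabilityMeasure μ]
    (hM : IsIID P M μ) (hμ : Integrable id μ) (d k : ℕ) :
    ∀ᵐ ω ∂P, Tendsto (fun j : ℕ =>
      (∑ i ∈ Finset.range j, delayedMax d (fun r => M (i * (k + d) + r) ω) k) / j)
      atTop (nhds (meanDelayedMax d k μ)) := by
  set W : ℕ → Ω → ℝ := fun i ω => delayedMax d (fun r => M (i * (k + d) + r) ω) k
  have hwindow : Measurable fun x : Fin (k + d) → ℝ =>
      delayedMax d (fun r => if hr : r < k + d then x ⟨r, hr⟩ else 0) k := by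
    refine (measurable_delayedMax d k).comp (measurable_pi_lambda _ fun r => ?_)
    split_ifs <;> fun_prop
  have hW : (fun i ω => delayedMax d
      (fun r => if r < k + d then M (i * (k + d) + r) ω else 0) k) = W := by
    ext i ω
    exact delayedMax_congr fun r hr => if_pos (by omega)
  have hiid := (hM.precomp (injective_mul_add_fin (k + d))).comp_block hwindow
  simp only [dite_eq_ite, hW] at hiid
  have hmean : ∫ ω, W 0 ω ∂P = meanDelayedMax d k μ := by simpa [W] using hM.integral_delayedMax d k
  rw [← hmean]
  exact strong_law_ae_real W ((hM.shift _).integrable_delayedMax hμ d k)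
    (fun i j hij => hiid.iIndepFun.indepFun hij) fun i =>
    ⟨(hiid.measurable i).aemeasurable, (hiid.measurable 0).aemeasurable,
      (hiid.map_eq i).trans (hiid.map_eq 0).symm⟩

end MeanDelayedMax

/-- The law of the maximum of a family, indexed by `κ`, of independent variables of law `μ`. -/
def maxLaw (κ : Type*) (μ : Measure ℝ) : Measure ℝ :=
  (Measure.infinitePi fun _ : κ => μ).map fun x => ⨆ i, x i

section MaxLaw

variable {κ : Type*} {μ : Measure ℝ}

lemma measurable_iSup_apply [Countable κ] : Measurable fun x : κ → ℝ => ⨆ i, x i :=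
  Measurable.iSup measurable_pi_apply

instance [Countable κ] [IsProbabilityMeasure μ] : IsProbabilityMeasure (maxLaw κ μ) :=
  Measure.isProbabilityMeasure_map measurable_iSup_apply.aemeasurable

lemma maxLaw_Iic [Fintype κ] [Nonempty κ] [IsProbabilityMeasure μ] (x : ℝ) :
    maxLaw κ μ (Iic x) = μ (Iic x) ^ Fintype.card κ := by
  have hpre : (fun y : κ → ℝ => ⨆ i, y i) ⁻¹' Iic x =
      ((Finset.univ : Finset κ) : Set κ).pi fun _ => Iic x := by
    ext y
    simp [ciSup_le_iff (Set.finite_range y).bddAbove, Pi.le_def]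
  rw [maxLaw, Measure.map_apply measurable_iSup_apply measurableSet_Iic, hpre,
    Measure.infinitePi_pi _ fun _ _ => measurableSet_Iic]
  simp

lemma integrable_id_maxLaw [Finite κ] [IsProbabilityMeasure μ] (hμ : Integrable id μ) :
    Integrable id (maxLaw κ μ) := by
  have := Fintype.ofFinite κ
  rw [maxLaw, integrable_map_measure aestronglyMeasurable_id measurable_iSup_apply.aemeasurable]
  have hcoord : ∀ i, Integrable (fun x : κ → ℝ => x i) (Measure.infinitePi fun _ : κ => μ) :=
    fun i => (measurePreserving_eval_infinitePi (fun _ : κ => μ) i).integrable_comp_of_integrable hμ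
  refine (integrable_finsetSum Finset.univ fun i _ => (hcoord i).abs).mono'
    measurable_iSup_apply.aestronglyMeasurable (Eventually.of_forall fun x => ?_)
  cases isEmpty_or_nonempty κ
  · simp
  · obtain ⟨i, hi⟩ := exists_eq_ciSup_of_finite (f := x)
    simp only [Function.comp_apply, id, ← hi, Real.norm_eq_abs]
    exact Finset.single_le_sum (f := fun i => |x i|) (fun _ _ => abs_nonneg _) (Finset.mem_univ i)

end MaxLaw

/-- The law of the largest jump made in a block of `l` generations of the `N`-BRW. -/
abbrev blockLaw (l N : ℕ) (μ : Measure ℝ) : Measure ℝ := maxLaw (Fin l × Fin N × Fin 2) μ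

lemma blockMax_stepMax {N : ℕ} (l : ℕ) (J : JumpArray N) (k : ℕ) :
    blockMax l (stepMax J) k =
      ⨆ q : Fin l × Fin N × Fin 2, J (k * l + q.1) q.2.1 q.2.2 :=
  (Finite.ciSup_prod fun q : Fin l × Fin N × Fin 2 => J (k * l + q.1) q.2.1 q.2.2).symm

/-- A random jump array with independent nonnegative entries of law `μ`. -/
structure IsJumpArray {Ω : Type*} [MeasurableSpace Ω] (P : Measure Ω) (μ : Measure ℝ) {N : ℕ}
    (J : Ω → JumpArray N) : Prop where
  nonneg : ∀ ω n i j, 0 ≤ J ω n i j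
  iid : IsIID P (fun (p : ℕ × Fin N × Fin 2) ω => J ω p.1 p.2.1 p.2.2) μ

namespace IsJumpArray

variable {Ω : Type*} [MeasurableSpace Ω] {P : Measure Ω} {μ : Measure ℝ} {N : ℕ}
  {J : Ω → JumpArray N}

lemma measurable_apply (hJ : IsJumpArray P μ J) (n : ℕ) (i : Fin N) (j : Fin 2) :
    Measurable fun ω => J ω n i j :=
  hJ.iid.measurable (n, i, j)

lemma measurable (hJ : IsJumpArray P μ J) : Measurable J :=
  measurable_pi_lambda _ fun n => measurable_pi_lambda _ fun i =>
    measurable_pi_lambda _ fun j => hJ.measurable_apply n i j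

lemma ae_nonneg [NeZero N] (hJ : IsJumpArray P μ J) : ∀ᵐ x ∂μ, 0 ≤ x := by
  rw [← hJ.iid.map_eq (0, 0, 0),
    ae_map_iff (hJ.measurable_apply 0 0 0).aemeasurable measurableSet_Ici]
  exact Eventually.of_forall fun ω => hJ.nonneg ω 0 0 0

lemma iid_blockMax [IsProbabilityMeasure P] [IsProbabilityMeasure μ] (hJ : IsJumpArray P μ J)
    (l : ℕ) : IsIID P (fun k ω => blockMax l (stepMax (J ω)) k) (blockLaw l N μ) := by
  have hinj : Function.Injective fun p : ℕ × Fin l × Fin N × Fin 2 => (p.1 * l + p.2.1, p.2.2) := by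
    rintro ⟨k, r, q⟩ ⟨k', r', q'⟩ h
    obtain ⟨hkr, rfl⟩ := Prod.mk.inj h
    obtain ⟨rfl, rfl⟩ := Prod.mk.inj (injective_mul_add_fin l (a₁ := (k, r)) (a₂ := (k', r')) hkr)
    rfl
  simp only [blockMax_stepMax]
  exact (hJ.iid.precomp hinj).comp_block measurable_iSup_apply

lemma meanDelayedMax_le_speed [IsProbabilityMeasure P] [IsProbabilityMeasure μ] [NeZero N]
    (hJ : IsJumpArray P μ J) (hμ : Integrable id μ) {l d k : ℕ} (hl : 0 < l) (hk : 0 < k)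
    (hN : N ≤ 2 ^ (d * l)) {v : ℝ}
    (hv : ∀ᵐ ω ∂P, Tendsto (fun n : ℕ => brwMax N (J ω) n / n) atTop (nhds v)) :
    meanDelayedMax d k (blockLaw l N μ) ≤ v * (l * (k + d)) := by
  have hslln := (hJ.iid_blockMax l).tendsto_sum_delayedMax_div (integrable_id_maxLaw hμ) d k
  obtain ⟨ω, hslln, hv⟩ := (hslln.and hv).exists
  have hq : 0 < (k + d) * l := by positivity
  have hsub := (hv.comp (tendsto_id.atTop_mul_const' hq)).mul_const (l * (k + d) : ℝ)
  refine le_of_tendsto_of_tendsto hslln hsub ?_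
  filter_upwards [eventually_gt_atTop 0] with j hj
  have hscale : brwMax N (J ω) (j * ((k + d) * l)) / (j * ((k + d) * l) : ℕ) * (l * (k + d)) =
      brwMax N (J ω) (j * ((k + d) * l)) / j := by
    push_cast
    field_simp
  simp only [Function.comp_apply, id, hscale]
  gcongr
  calc _ ≤ delayedMax d (blockMax l (stepMax (J ω))) (j * (k + d)) := sum_le_delayedMax_mul d k _ j
    _ ≤ delayedMax (d * l) (stepMax (J ω)) (j * (k + d) * l) :=
        delayedMax_blockMax_le hl le_rfl _ _
    _ ≤ brwMax N (J ω) (j * ((k + d) * l)) := by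
        rw [mul_assoc]
        exact delayedMax_stepMax_le_brwMax (hJ.nonneg ω) hN _

end IsJumpArray

/-! ### The upper bound on the speed -/

lemma le_of_lintegral_ofReal_le_add_mul {Ω : Type*} [MeasurableSpace Ω] {P : Measure Ω}
    [IsProbabilityMeasure P] {f : ℕ → Ω → ℝ} (hf : ∀ n, Measurable (f n)) {v B C : ℝ} (hB : 0 ≤ B)
    {q : ℕ} (hq : 0 < q) (hv : ∀ᵐ ω ∂P, Tendsto (fun n : ℕ => f n ω / n) atTop (nhds v))
    (hint : ∀ j : ℕ, ∫⁻ ω, ENNReal.ofReal (f (j * q) ω) ∂P ≤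
      ENNReal.ofReal (C + (j * q : ℕ) * B)) : v ≤ B := by
  have hmul : Tendsto (fun j : ℕ => j * q) atTop atTop := tendsto_id.atTop_mul_const' hq
  have hlim : Tendsto (fun j : ℕ => ENNReal.ofReal (C / (j * q : ℕ) + B)) atTop
      (nhds (ENNReal.ofReal B)) := by
    refine (ENNReal.continuous_ofReal.tendsto B).comp ?_
    simpa using ((tendsto_const_div_atTop_nhds_zero_nat C).comp hmul).add_const B
  rw [← ENNReal.ofReal_le_ofReal_iff hB]
  calc ENNReal.ofReal v = ∫⁻ _, ENNReal.ofReal v ∂P := by simp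
    _ = ∫⁻ ω, liminf (fun j : ℕ => ENNReal.ofReal (f (j * q) ω / (j * q : ℕ))) atTop ∂P := by
        refine lintegral_congr_ae (hv.mono fun ω hω => ?_)
        exact ((ENNReal.continuous_ofReal.tendsto v).comp (hω.comp hmul)).liminf_eq.symm
    _ ≤ liminf (fun j : ℕ => ∫⁻ ω, ENNReal.ofReal (f (j * q) ω / (j * q : ℕ)) ∂P) atTop :=
        lintegral_liminf_le fun j => ((hf _).div_const _).ennreal_ofReal
    _ ≤ liminf (fun j : ℕ => ENNReal.ofReal (C / (j * q : ℕ) + B)) atTop := by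
        refine liminf_le_liminf ?_
        filter_upwards [eventually_gt_atTop 0] with j hj
        have hpos : (0 : ℝ) < (j * q : ℕ) := by exact_mod_cast Nat.mul_pos hj hq
        simp_rw [div_eq_mul_inv (f _ _), ENNReal.ofReal_mul' (inv_nonneg.2 hpos.le)]
        rw [lintegral_mul_const' _ _ ENNReal.ofReal_ne_top]
        refine (mul_le_mul_left (hint j) _).trans_eq ?_
        rw [← ENNReal.ofReal_mul' (inv_nonneg.2 hpos.le)]
        congr 1
        field_simp
    _ = ENNReal.ofReal B := hlim.liminf_eq

lemma le_log_div_add_exp_mul {c K : ℝ} (hc : 0 < c) (hK : 0 < K) (s : ℝ) :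
    s ≤ log K / c + (c * K)⁻¹ * exp (c * s) := by
  have htangent := add_one_le_exp (c * s - log K)
  rw [exp_sub, exp_log hK] at htangent
  calc s = c * s / c := by field_simp
    _ ≤ (log K + exp (c * s) / K) / c := by gcongr; linarith
    _ = log K / c + (c * K)⁻¹ * exp (c * s) := by field_simp

lemma lintegral_iSup_le_of_lintegral_sum_exp_le {Ω ι : Type*} [MeasurableSpace Ω] [Fintype ι]
    [Nonempty ι] {P : Measure Ω} [IsProbabilityMeasure P] {Z : Ω → ι → ℝ} {c K : ℝ} (hc : 0 < c)
    (hK : 1 ≤ K) (hZ : ∫⁻ ω, ∑ i, ENNReal.ofReal (exp (c * Z ω i)) ∂P ≤ ENNReal.ofReal K) :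
    ∫⁻ ω, ENNReal.ofReal (⨆ i, Z ω i) ∂P ≤ ENNReal.ofReal ((log K + 1) / c) := by
  have hK0 : 0 < K := by linarith
  have hlog : 0 ≤ log K / c := div_nonneg (log_nonneg hK) hc.le
  have hsup : ∀ ω, ENNReal.ofReal (⨆ i, Z ω i) ≤ ENNReal.ofReal (log K / c) +
      ENNReal.ofReal (c * K)⁻¹ * ∑ i, ENNReal.ofReal (exp (c * Z ω i)) := by
    intro ω
    obtain ⟨i, hi⟩ := exists_eq_ciSup_of_finite (f := Z ω)
    rw [← hi]
    refine (ENNReal.ofReal_le_ofReal (le_log_div_add_exp_mul hc hK0 _)).trans ?_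
    rw [ENNReal.ofReal_add hlog (by positivity), ENNReal.ofReal_mul (by positivity)]
    gcongr
    exact Finset.single_le_sum (f := fun i => ENNReal.ofReal (exp (c * Z ω i)))
      (fun _ _ => zero_le) (Finset.mem_univ i)
  calc ∫⁻ ω, ENNReal.ofReal (⨆ i, Z ω i) ∂P
      ≤ ENNReal.ofReal (log K / c) + ENNReal.ofReal (c * K)⁻¹ * ENNReal.ofReal K := by
        refine (lintegral_mono hsup).trans ?_
        rw [lintegral_add_left measurable_const, lintegral_const_mul' _ _ ENNReal.ofReal_ne_top]
        simp only [lintegral_const, measure_univ, mul_one]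
        gcongr
    _ = ENNReal.ofReal ((log K + 1) / c) := by
        rw [← ENNReal.ofReal_mul (by positivity), ← ENNReal.ofReal_add hlog (by positivity)]
        congr 1
        field_simp

lemma exp_mul_indicator_Iic_le {a c x : ℝ} (hc : 0 ≤ c) (hx : 0 ≤ x) :
    exp (c * (Iic a).indicator id x) ≤ 1 + c * exp (c * a) * x := by
  rw [indicator_apply]
  split_ifs with hxa
  · have htangent := add_one_le_exp (-(c * x))
    rw [exp_neg, ← mul_le_mul_iff_of_pos_left (exp_pos (c * x)),
      mul_inv_cancel₀ (exp_ne_zero _)] at htangent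
    have hmono : c * x * exp (c * x) ≤ c * x * exp (c * a) := by
      gcongr
      exact hxa
    simp only [id]
    linarith
  · simpa using by positivity

lemma lintegral_exp_mul_indicator_Iic_le {μ : Measure ℝ} [IsProbabilityMeasure μ]
    (hμ0 : ∀ᵐ x ∂μ, 0 ≤ x) (hμ : Integrable id μ) {c : ℝ} (hc : 0 ≤ c) (a : ℝ) :
    ∫⁻ x, ENNReal.ofReal (exp (c * (Iic a).indicator id x)) ∂μ ≤
      ENNReal.ofReal (exp (c * exp (c * a) * ∫ x, x ∂μ)) := by
  have hlin : Integrable (fun x => c * exp (c * a) * x) μ := hμ.const_mul _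
  calc ∫⁻ x, ENNReal.ofReal (exp (c * (Iic a).indicator id x)) ∂μ
      ≤ ∫⁻ x, ENNReal.ofReal (1 + c * exp (c * a) * x) ∂μ := lintegral_mono_ae <| by
        filter_upwards [hμ0] with x hx
        exact ENNReal.ofReal_le_ofReal (exp_mul_indicator_Iic_le hc hx)
    _ = ENNReal.ofReal (∫ x, (1 + c * exp (c * a) * x) ∂μ) := by
        refine (ofReal_integral_eq_lintegral_ofReal ((integrable_const 1).add hlin) ?_).symm
        filter_upwards [hμ0] with x hx
        exact add_nonneg zero_le_one (by positivity)
    _ ≤ ENNReal.ofReal (exp (c * exp (c * a) * ∫ x, x ∂μ)) := by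
        rw [integral_add (integrable_const 1) hlin, integral_const_mul]
        simpa [add_comm] using
          ENNReal.ofReal_le_ofReal (add_one_le_exp (c * exp (c * a) * ∫ x, x ∂μ))

namespace IsJumpArray

variable {Ω : Type*} [MeasurableSpace Ω] {P : Measure Ω} {μ : Measure ℝ} {N : ℕ}
  {J : Ω → JumpArray N}

lemma indepFun_of_dependsOn (hJ : IsJumpArray P μ J) {β : Type*} [MeasurableSpace β]
    {F : JumpArray N → β} (hF : Measurable F) {n : ℕ} (hFn : DependsOn F (Iio n))
    (i : Fin N) (j : Fin 2) : IndepFun (fun ω => F (J ω)) (fun ω => J ω n i j) P := by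
  classical
  set S : Finset (ℕ × Fin N × Fin 2) := Finset.range n ×ˢ Finset.univ
  set T : Finset (ℕ × Fin N × Fin 2) := {(n, i, j)}
  have hdisj : Disjoint S T := by simp [S, T]
  have hext : Measurable fun (g : S → ℝ) (n : ℕ) (i : Fin N) (j : Fin 2) =>
      if h : (n, i, j) ∈ S then g ⟨_, h⟩ else 0 := by
    refine measurable_pi_lambda _ fun n => measurable_pi_lambda _ fun i =>
      measurable_pi_lambda _ fun j => ?_
    split_ifs <;> fun_prop
  have hindep := (hJ.iid.iIndepFun.indepFun_finset S T hdisj hJ.iid.measurable).comp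
    (hF.comp hext) (measurable_pi_apply (⟨(n, i, j), Finset.mem_singleton_self _⟩ : T))
  convert hindep using 1
  · ext1 ω
    refine hFn fun m hm => ?_
    ext i j
    simp [S, mem_Iio.1 hm]
  · rfl

/-- A many-to-one formula: weights determined by the past are independent of the present jumps. -/
lemma lintegral_sum_mul (hJ : IsJumpArray P μ J) {F : JumpArray N → Fin N → ENNReal}
    (hF : Measurable F) {n : ℕ} (hFn : DependsOn F (Iio n)) {f : ℝ → ENNReal} (hf : Measurable f) :
    ∫⁻ ω, ∑ p : Fin N × Fin 2, F (J ω) p.1 * f (J ω n p.1 p.2) ∂P =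
      2 * (∫⁻ ω, ∑ i, F (J ω) i ∂P) * ∫⁻ x, f x ∂μ := by
  have hFJ : ∀ i, Measurable fun ω => F (J ω) i := fun i =>
    (measurable_pi_apply i).comp (hF.comp hJ.measurable)
  have hfJ : ∀ i j, Measurable fun ω => f (J ω n i j) := fun i j =>
    hf.comp (hJ.measurable_apply n i j)
  have hprod : ∀ p : Fin N × Fin 2, ∫⁻ ω, F (J ω) p.1 * f (J ω n p.1 p.2) ∂P =
      (∫⁻ ω, F (J ω) p.1 ∂P) * ∫⁻ x, f x ∂μ := fun p => by
    have hindep := (hJ.indepFun_of_dependsOn hF hFn p.1 p.2).comp (measurable_pi_apply p.1) hf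
    rw [← hJ.iid.lintegral_comp hf (n, p)]
    exact lintegral_mul_eq_lintegral_mul_lintegral_of_indepFun (hFJ p.1) (hfJ p.1 p.2) hindep
  rw [lintegral_finsetSum _ fun p _ => (hFJ p.1).mul (hfJ p.1 p.2),
    lintegral_finsetSum _ fun i _ => hFJ i]
  simp_rw [hprod, Fintype.sum_prod_type, Fin.sum_univ_two, ← two_mul, Finset.mul_sum,
    Finset.sum_mul, mul_assoc]

section SmallJumps

variable [IsProbabilityMeasure P]

lemma lintegral_sum_exp_smallJumpSum_le (hJ : IsJumpArray P μ J) (a c : ℝ) (n : ℕ) :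
    ∫⁻ ω, ∑ i, ENNReal.ofReal (exp (c * smallJumpSum a (J ω) n i)) ∂P ≤
      N * (2 * ∫⁻ x, ENNReal.ofReal (exp (c * (Iic a).indicator id x)) ∂μ) ^ n := by
  induction n with
  | zero => simp [smallJumpSum, lineageFold]
  | succ n ih =>
    have hF : Measurable fun (J : JumpArray N) i =>
        ENNReal.ofReal (exp (c * smallJumpSum a J n i)) := by
      have := measurable_smallJumpSum (N := N) a n
      fun_prop
    have hFn : DependsOn (fun (J : JumpArray N) i =>
        ENNReal.ofReal (exp (c * smallJumpSum a J n i))) (Iio n) := fun J J' h => by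
      have := dependsOn_smallJumpSum a n h
      simp_all only
    have hf : Measurable fun x => ENNReal.ofReal (exp (c * (Iic a).indicator id x)) := by
      have : Measurable ((Iic a).indicator (id : ℝ → ℝ)) :=
        measurable_id.indicator measurableSet_Iic
      fun_prop
    refine (lintegral_mono fun ω => sum_exp_smallJumpSum_succ_le a c (J ω) n).trans ?_
    rw [hJ.lintegral_sum_mul hF hFn hf, mul_right_comm, pow_succ', mul_left_comm]
    gcongr

lemma lintegral_iSup_smallJumpSum_le [NeZero N] [IsProbabilityMeasure μ] (hJ : IsJumpArray P μ J)
    (hμ : Integrable id μ) (a : ℝ) {c : ℝ} (hc : 0 < c) (n : ℕ) :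
    ∫⁻ ω, ENNReal.ofReal (⨆ i, smallJumpSum a (J ω) n i) ∂P ≤
      ENNReal.ofReal ((log N + 1) / c + n * (log 2 / c + exp (c * a) * ∫ x, x ∂μ)) := by
  set m := ∫ x, x ∂μ
  have hm : 0 ≤ m := integral_nonneg_of_ae hJ.ae_nonneg
  set K : ℝ := N * (2 * exp (c * exp (c * a) * m)) ^ n
  have hN : (1 : ℝ) ≤ N := by exact_mod_cast NeZero.one_le
  have hK : 1 ≤ K := by
    refine one_le_mul_of_one_le_of_one_le hN (one_le_pow₀ ?_)
    linarith [one_le_exp (show 0 ≤ c * exp (c * a) * m by positivity)]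
  have hmoment : ∫⁻ ω, ∑ i, ENNReal.ofReal (exp (c * smallJumpSum a (J ω) n i)) ∂P ≤
      ENNReal.ofReal K := by
    rw [ENNReal.ofReal_mul (by positivity), ENNReal.ofReal_pow (by positivity),
      ENNReal.ofReal_mul (by positivity), ENNReal.ofReal_natCast, ENNReal.ofReal_ofNat]
    refine (hJ.lintegral_sum_exp_smallJumpSum_le a c n).trans ?_
    gcongr
    exact lintegral_exp_mul_indicator_Iic_le hJ.ae_nonneg hμ hc.le a
  refine (lintegral_iSup_le_of_lintegral_sum_exp_le hc hK hmoment).trans_eq ?_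
  rw [log_mul (by positivity) (by positivity), log_pow, log_mul (by positivity) (by positivity),
    log_exp]
  congr 1
  field_simp
  ring

end SmallJumps

lemma measurable_youngJumpSum (hJ : IsJumpArray P μ J) (D : ℕ) (a : ℝ) (n : ℕ) :
    Measurable fun ω => youngJumpSum D a (J ω) n := by
  have hage : Measurable fun ω => age D a (J ω) n := (measurable_age D a n).comp hJ.measurable
  refine Finset.measurable_sum _ fun p _ => Measurable.ite ?_
    ((measurable_id.indicator measurableSet_Ioi).comp (hJ.measurable_apply n p.1 p.2))
    measurable_const
  exact measurableSet_lt (by fun_prop) measurable_const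

section YoungJumps

variable [IsProbabilityMeasure P]

lemma lintegral_sum_age_eq_le (hJ : IsJumpArray P μ J) (a : ℝ) {D r : ℕ} (hr : r < D) (n : ℕ) :
    ∫⁻ ω, ∑ i, (if age D a (J ω) n i = r then 1 else 0 : ENNReal) ∂P ≤
      2 * N * μ (Ioi a) * 2 ^ r := by
  induction n generalizing r with
  | zero => simp [age, lineageFold, hr.ne']
  | succ n ih =>
    cases r with
    | zero =>
      have hindicator : Measurable ((Ioi a).indicator (1 : ℝ → ENNReal)) :=
        measurable_one.indicator measurableSet_Ioi
      calc _ ≤ ∫⁻ ω, ∑ p : Fin N × Fin 2, 1 * (Ioi a).indicator 1 (J ω n p.1 p.2) ∂P :=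
            lintegral_mono fun ω => by
              simpa only [one_mul] using sum_age_succ_eq_zero_le D a (J ω) n
        _ = 2 * N * μ (Ioi a) * 2 ^ 0 := by
            rw [hJ.lintegral_sum_mul (F := fun _ _ => 1) measurable_const (fun _ _ _ => rfl)
              hindicator, lintegral_indicator_one measurableSet_Ioi]
            simp
    | succ r =>
      calc _ ≤ ∫⁻ ω, 2 * ∑ i, (if age D a (J ω) n i = r then 1 else 0 : ENNReal) ∂P :=
            lintegral_mono fun ω => sum_age_succ_eq_succ_le D a r (J ω) n
        _ ≤ 2 * (2 * N * μ (Ioi a) * 2 ^ r) := by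
            rw [lintegral_const_mul' _ _ (by simp)]
            gcongr
            exact ih (by omega)
        _ = 2 * N * μ (Ioi a) * 2 ^ (r + 1) := by ring

lemma lintegral_sum_age_lt_le (hJ : IsJumpArray P μ J) (D : ℕ) (a : ℝ) (n : ℕ) :
    ∫⁻ ω, ∑ i, (if age D a (J ω) n i < D then 1 else 0 : ENNReal) ∂P ≤
      2 * N * μ (Ioi a) * 2 ^ D := by
  have hage : Measurable fun ω => age D a (J ω) n := (measurable_age D a n).comp hJ.measurable
  have hlt : ∀ r, (if r < D then 1 else 0 : ENNReal) =
      ∑ s ∈ Finset.range D, if r = s then 1 else 0 := fun r => by simp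
  simp_rw [hlt, Finset.sum_comm (s := Finset.univ)]
  rw [lintegral_finsetSum]
  · calc _ ≤ ∑ r ∈ Finset.range D, 2 * N * μ (Ioi a) * 2 ^ r :=
          Finset.sum_le_sum fun r hr => hJ.lintegral_sum_age_eq_le a (Finset.mem_range.1 hr) n
      _ ≤ 2 * N * μ (Ioi a) * 2 ^ D := by
          rw [← Finset.mul_sum]
          gcongr
          exact_mod_cast (Nat.geomSum_lt (s := Finset.range D) le_rfl (by simp)).le
  · refine fun r _ => Finset.measurable_sum _ fun i _ => ?_
    exact Measurable.ite (measurableSet_eq_fun (by fun_prop) measurable_const)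
      measurable_const measurable_const

lemma lintegral_youngJumpSum_le [NeZero N] [IsProbabilityMeasure μ] (hJ : IsJumpArray P μ J)
    (hμ : Integrable id μ) (D : ℕ) (a : ℝ) (n : ℕ) :
    ∫⁻ ω, ENNReal.ofReal (youngJumpSum D a (J ω) n) ∂P ≤
      ENNReal.ofReal (4 * N * μ.real (Ioi a) * 2 ^ D * ∫ x in Ioi a, x ∂μ) := by
  have hF : Measurable fun (J : JumpArray N) i => (if age D a J n i < D then 1 else 0 : ENNReal) :=
    measurable_pi_lambda _ fun i => Measurable.ite
      (measurableSet_lt ((measurable_pi_apply i).comp (measurable_age D a n)) measurable_const)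
      measurable_const measurable_const
  have hFn : DependsOn (fun (J : JumpArray N) i => (if age D a J n i < D then 1 else 0 : ENNReal))
      (Iio n) := fun J J' h => by
    have := dependsOn_age D a n h
    simp_all only
  have hf : Measurable fun x => ENNReal.ofReal ((Ioi a).indicator id x) :=
    (measurable_id.indicator measurableSet_Ioi).ennreal_ofReal
  have htail : ∫⁻ x, ENNReal.ofReal ((Ioi a).indicator id x) ∂μ =
      ENNReal.ofReal (∫ x in Ioi a, x ∂μ) := by
    rw [← integral_indicator measurableSet_Ioi]
    refine (ofReal_integral_eq_lintegral_ofReal (hμ.indicator measurableSet_Ioi) ?_).symm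
    filter_upwards [hJ.ae_nonneg] with x hx using indicator_apply_nonneg fun _ => hx
  calc _ ≤ ∫⁻ ω, ∑ p : Fin N × Fin 2, (if age D a (J ω) n p.1 < D then 1 else 0 : ENNReal) *
          ENNReal.ofReal ((Ioi a).indicator id (J ω n p.1 p.2)) ∂P := lintegral_mono fun ω => by
        rw [youngJumpSum, ENNReal.ofReal_sum_of_nonneg]
        · refine Finset.sum_le_sum fun p _ => ?_
          split_ifs <;> simp
        · intro p _
          exact ite_nonneg (indicator_apply_nonneg fun _ => hJ.nonneg ω _ _ _) le_rfl
    _ ≤ 2 * (2 * N * μ (Ioi a) * 2 ^ D) * ENNReal.ofReal (∫ x in Ioi a, x ∂μ) := by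
        rw [hJ.lintegral_sum_mul hF hFn hf, htail]
        gcongr
        exact hJ.lintegral_sum_age_lt_le D a n
    _ = _ := by
        rw [ENNReal.ofReal_mul (by positivity), ENNReal.ofReal_mul (by positivity),
          ENNReal.ofReal_mul (by positivity), ENNReal.ofReal_mul (by positivity),
          ENNReal.ofReal_pow (by positivity), ofReal_measureReal, ENNReal.ofReal_natCast,
          ENNReal.ofReal_ofNat, ENNReal.ofReal_ofNat]
        ring

end YoungJumps

lemma lintegral_brwMax_le [NeZero N] [IsProbabilityMeasure P] [IsProbabilityMeasure μ]
    (hJ : IsJumpArray P μ J) (hμ : Integrable id μ) (l d k : ℕ) (a : ℝ) {c : ℝ} (hc : 0 < c)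
    (j : ℕ) :
    ∫⁻ ω, ENNReal.ofReal (brwMax N (J ω) (j * (k * l))) ∂P ≤
      ENNReal.ofReal ((log N + 1) / c
        + (j * (k * l) : ℕ) * (log 2 / c + exp (c * a) * ∫ x, x ∂μ)
        + (j * meanDelayedMax d k (blockLaw l N μ) + (j * (k * l) : ℕ) *
          (4 * N * μ.real (Ioi a) * 2 ^ ((d + 1) * l) * ∫ x in Ioi a, x ∂μ))) := by
  set n := j * (k * l)
  set y := 4 * N * μ.real (Ioi a) * 2 ^ ((d + 1) * l) * ∫ x in Ioi a, x ∂μ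
  have hm : 0 ≤ ∫ x, x ∂μ := integral_nonneg_of_ae hJ.ae_nonneg
  have hmtail : 0 ≤ ∫ x in Ioi a, x ∂μ := integral_nonneg_of_ae (ae_restrict_of_ae hJ.ae_nonneg)
  have hmean := meanDelayedMax_nonneg d k (blockLaw l N μ)
  have hblock : Measurable fun ω => delayedMax d (blockMax l (stepMax (J ω))) (j * k) :=
    (measurable_delayedMax d _).comp (measurable_pi_lambda _ (hJ.iid_blockMax l).measurable)
  have hsmall : Measurable fun ω => ⨆ i, smallJumpSum a (J ω) n i :=
    Measurable.iSup fun i =>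
      (measurable_pi_apply i).comp ((measurable_smallJumpSum a n).comp hJ.measurable)
  calc ∫⁻ ω, ENNReal.ofReal (brwMax N (J ω) n) ∂P
      ≤ ∫⁻ ω, (ENNReal.ofReal (⨆ i, smallJumpSum a (J ω) n i)
          + (ENNReal.ofReal (delayedMax d (blockMax l (stepMax (J ω))) (j * k))
          + ∑ t ∈ Finset.range n,
            ENNReal.ofReal (youngJumpSum ((d + 1) * l) a (J ω) t))) ∂P := by
        refine lintegral_mono fun ω => (ENNReal.ofReal_le_ofReal
          (brwMax_le_iSup_smallJumpSum_add (d := d) a (hJ.nonneg ω) (mul_assoc j k l).ge)).trans ?_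
        refine ENNReal.ofReal_add_le.trans (add_le_add_right ?_ _)
        refine ENNReal.ofReal_add_le.trans (add_le_add_right ?_ _)
        exact (ENNReal.ofReal_sum_of_nonneg fun t _ =>
          youngJumpSum_nonneg _ a (hJ.nonneg ω) t).le
    _ ≤ ENNReal.ofReal ((log N + 1) / c + n * (log 2 / c + exp (c * a) * ∫ x, x ∂μ))
          + (ENNReal.ofReal (j * meanDelayedMax d k (blockLaw l N μ))
          + ∑ _ ∈ Finset.range n, ENNReal.ofReal y) := by
        rw [lintegral_add_left hsmall.ennreal_ofReal, lintegral_add_left hblock.ennreal_ofReal,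
          lintegral_finsetSum _ fun i _ => (hJ.measurable_youngJumpSum _ a i).ennreal_ofReal]
        gcongr
        · exact hJ.lintegral_iSup_smallJumpSum_le hμ a hc n
        · rw [(hJ.iid_blockMax l).lintegral_delayedMax (integrable_id_maxLaw hμ)]
          exact ENNReal.ofReal_le_ofReal (meanDelayedMax_mul_le (integrable_id_maxLaw hμ) d k j)
        · exact hJ.lintegral_youngJumpSum_le hμ _ a _
    _ = _ := by
        rw [Finset.sum_const, Finset.card_range, ← ENNReal.ofReal_nsmul, nsmul_eq_mul,
          ← ENNReal.ofReal_add (by positivity) (by positivity),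
          ← ENNReal.ofReal_add (by positivity) (by positivity)]

/-- The speed is at most the contribution of big jumps `d` blocks apart, plus that of jumps below
the level `a`, plus that of jumps above `a` that follow another one too closely. -/
lemma speed_le [NeZero N] [IsProbabilityMeasure P] [IsProbabilityMeasure μ]
    (hJ : IsJumpArray P μ J) (hμ : Integrable id μ) {l k : ℕ} (hl : 0 < l) (hk : 0 < k) (d : ℕ)
    (a : ℝ) {c : ℝ} (hc : 0 < c) {v : ℝ}
    (hv : ∀ᵐ ω ∂P, Tendsto (fun n : ℕ => brwMax N (J ω) n / n) atTop (nhds v)) :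
    v ≤ meanDelayedMax d k (blockLaw l N μ) / (k * l) + (log 2 / c + exp (c * a) * ∫ x, x ∂μ)
      + 4 * N * μ.real (Ioi a) * 2 ^ ((d + 1) * l) * ∫ x in Ioi a, x ∂μ := by
  have hm : 0 ≤ ∫ x, x ∂μ := integral_nonneg_of_ae hJ.ae_nonneg
  have hmtail : 0 ≤ ∫ x in Ioi a, x ∂μ := integral_nonneg_of_ae (ae_restrict_of_ae hJ.ae_nonneg)
  have hmean := meanDelayedMax_nonneg d k (blockLaw l N μ)
  have hbrwMax : ∀ n, Measurable fun ω => brwMax N (J ω) n := fun n => Measurable.iSup fun i =>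
    (measurable_pi_apply i).comp ((measurable_brw _ n).comp hJ.measurable)
  refine le_of_lintegral_ofReal_le_add_mul hbrwMax (C := (log N + 1) / c) (by positivity)
    (Nat.mul_pos hk hl) hv fun j => (hJ.lintegral_brwMax_le hμ l d k a hc j).trans_eq ?_
  congr 1
  push_cast
  field_simp
  ring

end IsJumpArray

/-! ### Regularly varying tails -/

section TailFunction

variable {Ω : Type*} [MeasurableSpace Ω] {P : Measure Ω} {X : Ω → ℝ} {T : ℝ → ℝ} {p x : ℝ}

/-- Functions of the form `x ↦ P(X > x)`, up to the total mass: antitone, right-continuous and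
vanishing at `+∞`. -/
structure IsTailFunction (T : ℝ → ℝ) : Prop where
  antitone : Antitone T
  right_continuous : ∀ x, ContinuousWithinAt T (Ici x) x
  tendsto_atTop : Tendsto T atTop (nhds 0)

/-- Generalized inverse on `[0, ∞)` of a tail function: `hinv P X y` is
`tailInv (tail P X) y⁻¹`. -/
def tailInv (T : ℝ → ℝ) (p : ℝ) : ℝ := sInf {x | 0 ≤ x ∧ T x ≤ p}

lemma tail_eq_tail_map (hX : Measurable X) : tail P X = tail (P.map X) id := by
  ext x
  simp only [tail, Measure.map_apply hX (measurableSet_lt measurable_const measurable_id)]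
  rfl

lemma tail_eq_one_sub_cdf [IsProbabilityMeasure P] (hX : Measurable X) :
    tail P X = fun x => 1 - cdf (P.map X) x := by
  have := Measure.isProbabilityMeasure_map (μ := P) hX.aemeasurable
  ext x
  rw [tail_eq_tail_map hX, cdf_eq_real, ← probReal_compl_eq_one_sub measurableSet_Iic, compl_Iic]
  rfl

lemma isTailFunction_tail [IsProbabilityMeasure P] (hX : Measurable X) :
    IsTailFunction (tail P X) := by
  rw [tail_eq_one_sub_cdf hX]
  exact
    { antitone := fun x y hxy => sub_le_sub_left (monotone_cdf _ hxy) 1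
      right_continuous := fun x => ((cdf (P.map X)).right_continuous x).const_sub 1
      tendsto_atTop := by simpa using (tendsto_cdf_atTop (P.map X)).const_sub 1 }

lemma tailInv_nonneg (T : ℝ → ℝ) (p : ℝ) : 0 ≤ tailInv T p := Real.sInf_nonneg fun _ hx => hx.1

namespace IsTailFunction

lemma nonneg (hT : IsTailFunction T) (x : ℝ) : 0 ≤ T x :=
  hT.antitone.le_of_tendsto hT.tendsto_atTop x

lemma apply_tailInv_le (hT : IsTailFunction T) (hp : 0 < p) : T (tailInv T p) ≤ p := by
  have hne : {x | 0 ≤ x ∧ T x ≤ p}.Nonempty :=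
    ((eventually_ge_atTop 0).and (hT.tendsto_atTop.eventually_le_const hp)).exists
  refine le_of_tendsto ((hT.right_continuous (tailInv T p)).mono Ioi_subset_Ici_self) ?_
  filter_upwards [self_mem_nhdsWithin] with y hy
  obtain ⟨z, hz, hzy⟩ := exists_lt_of_csInf_lt hne hy
  exact (hT.antitone hzy.le).trans hz.2

lemma tailInv_le_iff (hT : IsTailFunction T) (hp : 0 < p) (hx : 0 ≤ x) :
    tailInv T p ≤ x ↔ T x ≤ p :=
  ⟨fun h => (hT.antitone h).trans (hT.apply_tailInv_le hp),
    fun h => csInf_le ⟨0, fun _ hy => hy.1⟩ ⟨hx, h⟩⟩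

lemma lt_tailInv_iff (hT : IsTailFunction T) (hp : 0 < p) (hx : 0 ≤ x) :
    x < tailInv T p ↔ p < T x := by
  rw [← not_le, hT.tailInv_le_iff hp hx, not_le]

lemma measurable_tailInv (hT : IsTailFunction T) : Measurable (tailInv T) := by
  refine measurable_of_Iic fun x => ?_
  rcases lt_or_ge x 0 with hx | hx
  · convert MeasurableSet.empty
    exact eq_empty_of_forall_notMem fun p hp => (hx.trans_le (tailInv_nonneg T p)).not_ge hp
  have hneg : ∀ p < 0, tailInv T p = 0 := fun p hp => by
    have hempty : {y | 0 ≤ y ∧ T y ≤ p} = ∅ :=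
      eq_empty_of_forall_notMem fun y hy => (hp.trans_le (hT.nonneg y)).not_ge hy.2
    rw [tailInv, hempty, Real.sInf_empty]
  have hunion : tailInv T ⁻¹' Iic x
      = Iio 0 ∪ ({0} ∩ tailInv T ⁻¹' Iic x) ∪ (Ioi 0 ∩ Ici (T x)) := by
    ext p
    rcases lt_trichotomy p 0 with hp | rfl | hp
    · simp [hneg p hp, hx, hp]
    · simp
    · simp [hT.tailInv_le_iff hp hx, hp, hp.not_gt, hp.ne']
  rw [hunion]
  have hzero : MeasurableSet ({0} ∩ tailInv T ⁻¹' Iic x) :=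
    (subsingleton_singleton.anti inter_subset_left).measurableSet
  exact (measurableSet_Iio.union hzero).union (measurableSet_Ioi.inter measurableSet_Ici)

end IsTailFunction

end TailFunction

lemma apply_two_pow_mul_le {f : ℝ → ℝ} {q x : ℝ} (hq : 0 ≤ q) (hx : 0 ≤ x)
    (h : ∀ y, x ≤ y → f (2 * y) ≤ q * f y) (j : ℕ) : f (2 ^ j * x) ≤ q ^ j * f x := by
  induction j with
  | zero => simp
  | succ j ih =>
    calc f (2 ^ (j + 1) * x) = f (2 * (2 ^ j * x)) := by ring_nf
      _ ≤ q * f (2 ^ j * x) := h _ (le_mul_of_one_le_left hx (one_le_pow₀ one_le_two))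
      _ ≤ q * (q ^ j * f x) := mul_le_mul_of_nonneg_left ih hq
      _ = q ^ (j + 1) * f x := by ring

/-- Tail functions varying regularly at `+∞` with index `-α`. -/
structure IsRegVarTail (T : ℝ → ℝ) (α : ℝ) : Prop extends IsTailFunction T where
  tendsto_div : ∀ z, 0 < z → Tendsto (fun x => T x / T (z * x)) atTop (nhds (z ^ α))

namespace IsRegVarTail

variable {T : ℝ → ℝ} {α β γ : ℝ}

lemma pos (hT : IsRegVarTail T α) (x : ℝ) : 0 < T x := by
  have hone := hT.tendsto_div 1 one_pos
  simp only [one_mul, one_rpow] at hone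
  obtain ⟨y, hy, hxy⟩ := ((hone.eventually_ne one_ne_zero).and (eventually_ge_atTop x)).exists
  exact ((hT.nonneg y).lt_of_ne' fun h => hy (by simp [h])).trans_le (hT.antitone hxy)

lemma tendsto_tailInv (hT : IsRegVarTail T α) :
    Tendsto (tailInv T) (nhdsWithin 0 (Ioi 0)) atTop := by
  refine tendsto_atTop.2 fun b => ?_
  filter_upwards [Ioo_mem_nhdsGT (hT.pos (max b 0))] with p hp
  exact (le_max_left b 0).trans ((hT.lt_tailInv_iff hp.1 (le_max_right b 0)).2 hp.2).le

lemma tendsto_apply_tailInv_div (hT : IsRegVarTail T α) :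
    Tendsto (fun p => T (tailInv T p) / p) (nhdsWithin 0 (Ioi 0)) (nhds 1) := by
  refine tendsto_order.2 ⟨fun b hb => ?_, fun b hb => ?_⟩
  · have hcont : Tendsto (fun w : ℝ => w ^ α) (nhdsWithin 1 (Iio 1)) (nhds 1) := by
      simpa using ((continuousAt_rpow_const 1 α (Or.inl one_ne_zero)).tendsto).mono_left
        nhdsWithin_le_nhds
    obtain ⟨w, hbw, hw0, hw1⟩ :=
      ((hcont.eventually_const_lt hb).and (Ioo_mem_nhdsLT one_pos)).exists
    filter_upwards [((hT.tendsto_div w hw0).comp hT.tendsto_tailInv).eventually_const_lt hbw,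
      hT.tendsto_tailInv.eventually_gt_atTop 0, self_mem_nhdsWithin] with p hbp hQ hp
    have hlt : p < T (w * tailInv T p) :=
      (hT.lt_tailInv_iff hp (by positivity)).1 (mul_lt_of_lt_one_left hQ hw1)
    exact hbp.trans_le (div_le_div_of_nonneg_left (hT.nonneg _) hp hlt.le)
  · filter_upwards [self_mem_nhdsWithin] with p hp
    exact ((div_le_one hp).2 (hT.apply_tailInv_le hp)).trans_lt hb

lemma tendsto_apply_mul_tailInv_div (hT : IsRegVarTail T α) {z : ℝ} (hz : 0 < z) :
    Tendsto (fun p => T (z * tailInv T p) / p) (nhdsWithin 0 (Ioi 0)) (nhds (z ^ (-α))) := by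
  have h := hT.tendsto_apply_tailInv_div.div ((hT.tendsto_div z hz).comp hT.tendsto_tailInv)
    (rpow_pos_of_pos hz α).ne'
  rw [one_div, ← rpow_neg hz.le] at h
  refine h.congr fun p => ?_
  have hne := (hT.pos (tailInv T p)).ne'
  have hne' := (hT.pos (z * tailInv T p)).ne'
  simp only [Pi.div_apply, Function.comp_apply]
  field_simp

lemma tendsto_tailInv_div_tailInv (hT : IsRegVarTail T α) (hα : 0 < α) {ι : Type*} {F : Filter ι}
    {p q : ι → ℝ} (hp : Tendsto p F (nhdsWithin 0 (Ioi 0))) {θ : ℝ} (hθ : 0 < θ)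
    (hqp : Tendsto (fun i => q i / p i) F (nhds θ)) :
    Tendsto (fun i => tailInv T (q i) / tailInv T (p i)) F (nhds (θ ^ (-(1 / α)))) := by
  have hp0 : ∀ᶠ i in F, 0 < p i := hp.eventually self_mem_nhdsWithin
  have hq0 : ∀ᶠ i in F, 0 < q i := by
    filter_upwards [hp0, hqp.eventually_const_lt hθ] with i hpi hi
      using (div_pos_iff_of_pos_right hpi).1 hi
  have hQ : ∀ᶠ i in F, 0 < tailInv T (p i) :=
    (hT.tendsto_tailInv.comp hp).eventually_gt_atTop 0
  have hratio : ∀ z, 0 < z →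
      Tendsto (fun i => T (z * tailInv T (p i)) / q i) F (nhds (z ^ (-α) / θ)) := fun z hz => by
    refine (((hT.tendsto_apply_mul_tailInv_div hz).comp hp).div hqp hθ.ne').congr' ?_
    filter_upwards [hp0] with i hi
    simp only [Pi.div_apply, Function.comp_apply, div_div_div_cancel_right₀ hi.ne']
  have hθα : (θ ^ (-(1 / α))) ^ (-α) = θ := by
    rw [← rpow_mul hθ.le, neg_mul_neg, one_div_mul_cancel hα.ne', rpow_one]
  have hθ0 : 0 < θ ^ (-(1 / α)) := by positivity
  refine tendsto_order.2 ⟨fun b hb => ?_, fun b hb => ?_⟩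
  · obtain ⟨z, hbz, hzθ⟩ := exists_between (max_lt hb hθ0)
    have hz : 0 < z := (le_max_right _ _).trans_lt hbz
    have hgt : 1 < z ^ (-α) / θ := by
      rw [one_lt_div hθ]
      exact hθα ▸ rpow_lt_rpow_of_neg hz hzθ (neg_lt_zero.2 hα)
    filter_upwards [(hratio z hz).eventually_const_lt hgt, hq0, hQ] with i hi hqi hQi
    refine ((le_max_left _ _).trans_lt hbz).trans ((lt_div_iff₀ hQi).2 ?_)
    exact (hT.lt_tailInv_iff hqi (by positivity)).2 ((one_lt_div hqi).1 hi)
  · obtain ⟨z, hθz, hzb⟩ := exists_between hb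
    have hz : 0 < z := hθ0.trans hθz
    have hlt : z ^ (-α) / θ < 1 := by
      rw [div_lt_one hθ]
      exact hθα ▸ rpow_lt_rpow_of_neg hθ0 hθz (neg_lt_zero.2 hα)
    filter_upwards [(hratio z hz).eventually_lt_const hlt, hq0, hQ] with i hi hqi hQi
    refine ((div_le_iff₀ hQi).2 ?_).trans_lt hzb
    exact (hT.tailInv_le_iff hqi (by positivity)).2 ((div_lt_one hqi).1 hi).le

lemma exists_apply_two_mul_le (hT : IsRegVarTail T α) (hβ : β < α) :
    ∃ x₀ > 0, ∀ x, x₀ ≤ x → T (2 * x) ≤ 2 ^ (-β) * T x := by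
  obtain ⟨x₀, hx₀⟩ := eventually_atTop.1 ((hT.tendsto_div 2 two_pos).eventually_const_lt
    (rpow_lt_rpow_of_exponent_lt one_lt_two hβ))
  refine ⟨max x₀ 1, by positivity, fun x hx => ?_⟩
  rw [rpow_neg two_pos.le, inv_mul_eq_div, le_div_iff₀' (by positivity)]
  exact ((lt_div_iff₀ (hT.pos _)).1 (hx₀ x (le_of_max_le_left hx))).le

lemma exists_le_apply_two_mul (hT : IsRegVarTail T α) (hγ : α < γ) :
    ∃ x₀ > 0, ∀ x, x₀ ≤ x → 2 ^ (-γ) * T x ≤ T (2 * x) := by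
  obtain ⟨x₀, hx₀⟩ := eventually_atTop.1 ((hT.tendsto_div 2 two_pos).eventually_lt_const
    (rpow_lt_rpow_of_exponent_lt one_lt_two hγ))
  refine ⟨max x₀ 1, by positivity, fun x hx => ?_⟩
  rw [rpow_neg two_pos.le, inv_mul_eq_div, div_le_iff₀' (by positivity)]
  exact ((div_lt_iff₀ (hT.pos _)).1 (hx₀ x (le_of_max_le_left hx))).le

/-- Potter's upper bound. -/
lemma exists_apply_mul_le (hT : IsRegVarTail T α) (hβ : 0 ≤ β) (hβα : β < α) :
    ∃ x₀ > 0, ∀ x, x₀ ≤ x → ∀ z, 1 ≤ z → T (z * x) ≤ (z / 2) ^ (-β) * T x := by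
  obtain ⟨x₀, hx₀, h⟩ := hT.exists_apply_two_mul_le hβα
  refine ⟨x₀, hx₀, fun x hx z hz => ?_⟩
  obtain ⟨j, hjz, hzj⟩ := exists_nat_pow_near hz one_lt_two
  have hx0 : 0 < x := hx₀.trans_le hx
  have hTx := hT.nonneg x
  calc T (z * x) ≤ T (2 ^ j * x) := hT.antitone (by gcongr)
    _ ≤ (2 ^ (-β)) ^ j * T x :=
      apply_two_pow_mul_le (by positivity) hx0.le (fun y hy => h y (hx.trans hy)) j
    _ = (2 ^ j) ^ (-β) * T x := by rw [← rpow_mul_natCast two_pos.le, ← rpow_natCast_mul two_pos.le,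
          mul_comm (-β)]
    _ ≤ (z / 2) ^ (-β) * T x := by
      gcongr ?_ * _
      refine rpow_le_rpow_of_nonpos (by positivity) ?_ (neg_nonpos.2 hβ)
      linarith [pow_succ (2 : ℝ) j]

/-- Potter's lower bound. -/
lemma exists_le_apply_mul (hT : IsRegVarTail T α) (hγ : 0 ≤ γ) (hαγ : α < γ) :
    ∃ x₀ > 0, ∀ x, x₀ ≤ x → ∀ z, 1 ≤ z → (2 * z) ^ (-γ) * T x ≤ T (z * x) := by
  obtain ⟨x₀, hx₀, h⟩ := hT.exists_le_apply_two_mul hαγ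
  refine ⟨x₀, hx₀, fun x hx z hz => ?_⟩
  obtain ⟨j, hjz, hzj⟩ := exists_nat_pow_near hz one_lt_two
  have hx0 : 0 < x := hx₀.trans_le hx
  have hTx := hT.nonneg x
  have hdyadic : (2 ^ (-γ)) ^ (j + 1) * T x ≤ T (2 ^ (j + 1) * x) := by
    simpa using apply_two_pow_mul_le (f := fun y => -T y) (q := 2 ^ (-γ)) (by positivity) hx0.le
      (fun y hy => by linarith [h y (hx.trans hy)]) (j + 1)
  calc (2 * z) ^ (-γ) * T x ≤ (2 ^ (j + 1)) ^ (-γ) * T x := by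
        gcongr ?_ * _
        refine rpow_le_rpow_of_nonpos (by positivity) ?_ (neg_nonpos.2 hγ)
        linarith [pow_succ (2 : ℝ) j]
    _ = (2 ^ (-γ)) ^ (j + 1) * T x := by
      rw [← rpow_mul_natCast two_pos.le, ← rpow_natCast_mul two_pos.le, mul_comm (-γ)]
    _ ≤ T (2 ^ (j + 1) * x) := hdyadic
    _ ≤ T (z * x) := hT.antitone (by gcongr)

lemma exists_rpow_le_tailInv (hT : IsRegVarTail T α) (hγ : 0 < γ) (hαγ : α < γ) :
    ∃ C > 0, ∀ᶠ p in nhdsWithin 0 (Ioi 0), C * p ^ (-(1 / γ)) ≤ tailInv T p := by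
  obtain ⟨x₀, hx₀, hlower⟩ := hT.exists_le_apply_mul hγ.le hαγ
  have hT0 := hT.pos x₀
  refine ⟨x₀ / 2 * T x₀ ^ (1 / γ), by positivity, ?_⟩
  filter_upwards [hT.tendsto_tailInv.eventually_ge_atTop x₀, self_mem_nhdsWithin] with p hxp hp
  have hp0 : 0 < p := hp
  have hz : 1 ≤ tailInv T p / x₀ := (one_le_div hx₀).2 hxp
  have hpow : T x₀ / p ≤ (2 * (tailInv T p / x₀)) ^ γ := by
    have h := (hlower x₀ le_rfl _ hz).trans_eq (by rw [div_mul_cancel₀ _ hx₀.ne'])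
    rw [rpow_neg (by positivity), inv_mul_le_iff₀ (by positivity)] at h
    exact (div_le_iff₀ hp0).2 (h.trans (by gcongr; exact hT.apply_tailInv_le hp0))
  calc x₀ / 2 * T x₀ ^ (1 / γ) * p ^ (-(1 / γ)) = x₀ / 2 * (T x₀ / p) ^ (1 / γ) := by
        rw [div_rpow hT0.le hp0.le, rpow_neg hp0.le]; ring
    _ ≤ x₀ / 2 * ((2 * (tailInv T p / x₀)) ^ γ) ^ (1 / γ) := by gcongr
    _ = tailInv T p := by
      rw [one_div, rpow_rpow_inv (by positivity) hγ.ne']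
      field_simp

end IsRegVarTail

section TruncatedMean

variable {μ : Measure ℝ}

lemma setIntegral_Ioi_id [IsFiniteMeasure μ] (hμ : Integrable id μ) (a : ℝ) :
    ∫ x in Ioi a, x ∂μ = a * tail μ id a + ∫ t in Ioi 0, tail μ id (a + t) := by
  have hint : Integrable (fun x => x - a) (μ.restrict (Ioi a)) :=
    hμ.restrict.sub (integrable_const a)
  have hlayer : ∫ x in Ioi a, (x - a) ∂μ = ∫ t in Ioi 0, tail μ id (a + t) := by
    rw [hint.integral_eq_integral_meas_lt
      ((ae_restrict_mem measurableSet_Ioi).mono fun x hx => sub_nonneg.2 (le_of_lt hx))]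
    refine setIntegral_congr_fun measurableSet_Ioi fun t ht => ?_
    have hset : {x | t < x - a} ∩ Ioi a = {x | a + t < x} := by
      ext x
      have ht' : 0 < t := ht
      simp only [mem_inter_iff, mem_ofPred_eq, mem_Ioi]
      constructor
      · rintro ⟨h, -⟩; linarith
      · intro h; constructor <;> linarith
    rw [measureReal_restrict_apply' measurableSet_Ioi, hset]
    rfl
  calc ∫ x in Ioi a, x ∂μ = ∫ x in Ioi a, (a + (x - a)) ∂μ := by simp only [add_sub_cancel]
    _ = a * tail μ id a + ∫ t in Ioi 0, tail μ id (a + t) := by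
      rw [integral_add (integrable_const a) hint, hlayer, setIntegral_const, smul_eq_mul, mul_comm]
      rfl

lemma IsRegVarTail.exists_setIntegral_Ioi_le [IsFiniteMeasure μ] {α : ℝ}
    (hT : IsRegVarTail (tail μ id) α) (hα : 1 < α) (hμ : Integrable id μ) :
    ∃ C > 0, ∀ᶠ a in atTop, ∫ x in Ioi a, x ∂μ ≤ C * (a * tail μ id a) := by
  obtain ⟨β, hβ, hβα⟩ := exists_between hα
  obtain ⟨x₀, hx₀, hpotter⟩ := hT.exists_apply_mul_le (by linarith) hβα
  have hint : IntegrableOn (fun s : ℝ => ((s + 1) / 2) ^ (-β)) (Ioi 0) := by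
    have h : IntegrableOn (fun s : ℝ => (s + 1) ^ (-β) / 2 ^ (-β)) (Ioi 0) :=
      (integrableOn_add_rpow_Ioi_of_lt (neg_lt_neg hβ) (by norm_num)).div_const _
    refine h.congr_fun (fun s (hs : 0 < s) => ?_) measurableSet_Ioi
    exact (div_rpow (by positivity) two_pos.le _).symm
  have hnn : 0 ≤ ∫ s in Ioi (0 : ℝ), ((s + 1) / 2) ^ (-β) :=
    setIntegral_nonneg measurableSet_Ioi fun s (hs : 0 < s) => by positivity
  refine ⟨1 + ∫ s in Ioi (0 : ℝ), ((s + 1) / 2) ^ (-β), by positivity, ?_⟩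
  filter_upwards [eventually_ge_atTop x₀] with a ha
  have ha0 : 0 < a := hx₀.trans_le ha
  have hscale : ∫ t in Ioi 0, tail μ id (a + t) = a * ∫ s in Ioi 0, tail μ id ((s + 1) * a) := by
    have h := integral_comp_mul_left_Ioi (fun t => tail μ id (a + t)) 0 ha0
    rw [mul_zero, smul_eq_mul, eq_inv_mul_iff_mul_eq₀ ha0.ne'] at h
    rw [← h]
    congr! 4 with s
    ring
  have hbound : ∫ s in Ioi 0, tail μ id ((s + 1) * a)
      ≤ ∫ s in Ioi (0 : ℝ), ((s + 1) / 2) ^ (-β) * tail μ id a :=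
    integral_mono_of_nonneg (ae_of_all _ fun s => hT.nonneg _) (hint.mul_const _)
      ((ae_restrict_mem measurableSet_Ioi).mono fun s (hs : 0 < s) =>
        hpotter a ha (s + 1) (by linarith))
  rw [integral_mul_const] at hbound
  calc ∫ x in Ioi a, x ∂μ = a * tail μ id a + a * ∫ s in Ioi 0, tail μ id ((s + 1) * a) := by
        rw [setIntegral_Ioi_id hμ, hscale]
    _ ≤ a * tail μ id a + a * ((∫ s in Ioi (0 : ℝ), ((s + 1) / 2) ^ (-β)) * tail μ id a) := by
        gcongr
    _ = (1 + ∫ s in Ioi (0 : ℝ), ((s + 1) / 2) ^ (-β)) * (a * tail μ id a) := by ring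

end TruncatedMean

/-! ### Quantiles and the Fréchet limit -/

/-- The uniform law on the unit interval. -/
def unitUniform : Measure ℝ := volume.restrict (Ioo 0 1)

instance : IsProbabilityMeasure unitUniform := ⟨by simp [unitUniform]⟩

lemma ae_mem_Ioo_unitUniform : ∀ᵐ u ∂unitUniform, u ∈ Ioo (0 : ℝ) 1 :=
  ae_restrict_mem measurableSet_Ioo

lemma unitUniform_Ici {t : ℝ} (ht : 0 ≤ t) : unitUniform (Ici t) = ENNReal.ofReal (1 - t) := by
  have hae : Ici t =ᵐ[volume.restrict (Ioo 0 1)] Ioi t := Ioi_ae_eq_Ici.symm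
  rw [unitUniform, measure_congr hae, Measure.restrict_apply measurableSet_Ioi, inter_comm,
    Ioo_inter_Ioi, Real.volume_Ioo, max_eq_right ht]

lemma integrable_rpow_unitUniform {s : ℝ} (hs : -1 < s) :
    Integrable (fun u => u ^ s) unitUniform :=
  (intervalIntegral.integrableOn_Ioo_rpow_iff zero_lt_one).2 hs

/-- Inverse transform sampling. -/
lemma map_tailInv_unitUniform {μ : Measure ℝ} [IsProbabilityMeasure μ] (hμ : ∀ᵐ x ∂μ, 0 ≤ x) :
    unitUniform.map (tailInv (tail μ id)) = μ := by
  have hT := isTailFunction_tail (P := μ) measurable_id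
  have := Measure.isProbabilityMeasure_map (μ := unitUniform) hT.measurable_tailInv.aemeasurable
  refine Measure.ext_of_Iic _ _ fun x => ?_
  rw [Measure.map_apply hT.measurable_tailInv measurableSet_Iic]
  rcases lt_or_ge x 0 with hx | hx
  · have hempty : tailInv (tail μ id) ⁻¹' Iic x = ∅ :=
      eq_empty_of_forall_notMem fun u hu => (hx.trans_le (tailInv_nonneg _ u)).not_ge hu
    have hnull : μ (Iic x) = 0 :=
      measure_mono_null (fun y hy => (lt_of_le_of_lt hy hx).not_ge) hμ
    rw [hempty, measure_empty, hnull]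
  · have hae : tailInv (tail μ id) ⁻¹' Iic x =ᵐ[unitUniform] Ici (tail μ id x) := by
      filter_upwards [ae_mem_Ioo_unitUniform] with u hu
      exact propext (hT.tailInv_le_iff hu.1 hx)
    rw [measure_congr hae, unitUniform_Ici (hT.nonneg x), tail_eq_one_sub_cdf measurable_id]
    simp [cdf_eq_real]

section InfinitePi

variable {E : Type*} [MeasurableSpace E] {ν : Measure E} [IsProbabilityMeasure ν]

lemma meanDelayedMax_map {f : E → ℝ} (hf : Measurable f) (d k : ℕ) :
    meanDelayedMax d k (ν.map f) =
      ∫ u, delayedMax d (fun i => f (u i)) k ∂Measure.infinitePi fun _ : ℕ => ν := by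
  have := Measure.isProbabilityMeasure_map (μ := ν) hf.aemeasurable
  have hfam : Measurable fun (u : ℕ → E) i => f (u i) :=
    measurable_pi_lambda _ fun i => hf.comp (measurable_pi_apply i)
  rw [meanDelayedMax, ← Measure.infinitePi_map_pi (μ := fun _ => ν) (fun _ => hf),
    integral_map hfam.aemeasurable (measurable_delayedMax d k).aestronglyMeasurable]

lemma meanDelayedMax_map_const_mul {f : E → ℝ} (hf : Measurable f) {c : ℝ} (hc : 0 ≤ c) (d k : ℕ) :
    meanDelayedMax d k (ν.map fun x => c * f x) = c * meanDelayedMax d k (ν.map f) := by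
  rw [meanDelayedMax_map (hf.const_mul c), meanDelayedMax_map hf, ← integral_const_mul]
  simp_rw [delayedMax_const_mul d _ hc k]

lemma ae_infinitePi_forall {ι : Type*} [Countable ι] {p : E → Prop} (hp : ∀ᵐ x ∂ν, p x) :
    ∀ᵐ x ∂Measure.infinitePi fun _ : ι => ν, ∀ i, p (x i) :=
  ae_all_iff.2 fun i =>
    (measurePreserving_eval_infinitePi (fun _ : ι => ν) i).quasiMeasurePreserving.ae hp

lemma integrable_eval_infinitePi {ι : Type*} {f : E → ℝ} (hf : Integrable f ν) (i : ι) :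
    Integrable (fun x : ι → E => f (x i)) (Measure.infinitePi fun _ => ν) :=
  (measurePreserving_eval_infinitePi (fun _ : ι => ν) i).integrable_comp_of_integrable hf

lemma tendsto_meanDelayedMax_map_of_dominated {ι : Type*} {F : Filter ι} [F.IsCountablyGenerated]
    {f : ι → E → ℝ} {f₀ g : E → ℝ} (hf : ∀ i, Measurable (f i)) (hf₀ : Measurable f₀)
    (hg : Integrable g ν) (hfg : ∀ᶠ i in F, ∀ᵐ x ∂ν, f i x ≤ g x)
    (hlim : ∀ᵐ x ∂ν, Tendsto (fun i => f i x) F (nhds (f₀ x))) (d k : ℕ) :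
    Tendsto (fun i => meanDelayedMax d k (ν.map (f i))) F
      (nhds (meanDelayedMax d k (ν.map f₀))) := by
  simp only [meanDelayedMax_map (hf _), meanDelayedMax_map hf₀]
  refine tendsto_integral_filter_of_dominated_convergence
    (fun u => ∑ j ∈ Finset.range k, max (g (u j)) 0) (.of_forall fun i => ?_) ?_
    (integrable_finsetSum _ fun j _ => (integrable_eval_infinitePi hg j).pos_part) ?_
  · exact ((measurable_delayedMax d k).comp (measurable_pi_lambda _ fun j =>
      (hf i).comp (measurable_pi_apply j))).aestronglyMeasurable
  · filter_upwards [hfg] with i hi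
    filter_upwards [ae_infinitePi_forall hi] with u hu
    rw [norm_of_nonneg (delayedMax_nonneg _ _ _)]
    exact (delayedMax_le_sum d _ k).trans
      (Finset.sum_le_sum fun j _ => max_le_max_right 0 (hu j))
  · filter_upwards [ae_infinitePi_forall hlim] with u hu using
      ((continuous_delayedMax d k).tendsto _).comp (tendsto_pi_nhds.2 hu)

end InfinitePi

/-- The level such that the maximum of `n` independent variables exceeds its upper `p`-quantile with
the same probability `p` as one of them exceeds its upper `maxLevel n p`-quantile. -/
def maxLevel (n : ℕ) (p : ℝ) : ℝ := 1 - (1 - p) ^ (1 / n : ℝ)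

section MaxLevel

variable {n : ℕ} {p : ℝ}

lemma measurable_maxLevel (n : ℕ) : Measurable (maxLevel n) := by
  unfold maxLevel
  fun_prop

lemma div_le_maxLevel (hn : 0 < n) (hp : p ≤ 1) : p / n ≤ maxLevel n p := by
  have hn1 : (1 : ℝ) ≤ n := by exact_mod_cast hn
  have hbernoulli := rpow_one_add_le_one_add_mul_self (s := -p) (p := 1 / n) (by linarith)
    (by positivity) ((div_le_one (by positivity)).2 hn1)
  rw [← sub_eq_add_neg] at hbernoulli
  rw [maxLevel, div_eq_inv_mul, ← one_div]
  linarith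

lemma maxLevel_pos (hn : 0 < n) (hp : p ∈ Ioo (0 : ℝ) 1) : 0 < maxLevel n p :=
  (div_pos hp.1 (by exact_mod_cast hn)).trans_le (div_le_maxLevel hn hp.2.le)

lemma tendsto_mul_maxLevel (hp : p < 1) :
    Tendsto (fun n : ℕ => n * maxLevel n p) atTop (nhds (-log (1 - p))) := by
  have hderiv : HasDerivAt (fun x : ℝ => (1 - p) ^ x) ((1 - p) ^ (0 : ℝ) * log (1 - p)) 0 :=
    (hasStrictDerivAt_const_rpow (sub_pos.2 hp) 0).hasDerivAt
  have hinv : Tendsto (fun n : ℕ => (1 / n : ℝ)) atTop (nhdsWithin 0 (Ioi 0)) := by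
    refine tendsto_nhdsWithin_iff.2 ⟨tendsto_one_div_atTop_nhds_zero_nat, ?_⟩
    filter_upwards [eventually_gt_atTop 0] with n hn
    exact one_div_pos.2 (by exact_mod_cast hn : (0 : ℝ) < n)
  have hslope := (hderiv.tendsto_slope_zero_right.comp hinv).neg
  simp only [rpow_zero, one_mul] at hslope
  refine hslope.congr fun n => ?_
  simp only [Function.comp_apply, maxLevel, zero_add, smul_eq_mul, one_div, inv_inv]
  ring

variable {κ : Type*} [Fintype κ] [Nonempty κ] {μ : Measure ℝ} [IsProbabilityMeasure μ]

lemma tail_maxLaw (x : ℝ) :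
    tail (maxLaw κ μ) id x = 1 - (1 - tail μ id x) ^ Fintype.card κ := by
  simp [tail_eq_one_sub_cdf measurable_id, cdf_eq_real, measureReal_def, maxLaw_Iic]

lemma tailInv_maxLaw (hp : p ≤ 1) :
    tailInv (tail (maxLaw κ μ) id) p = tailInv (tail μ id) (maxLevel (Fintype.card κ) p) := by
  have hcard : (0 : ℝ) < Fintype.card κ := by exact_mod_cast Fintype.card_pos
  refine congrArg sInf (ext fun x => and_congr_right fun _ => ?_)
  have hx : 0 ≤ 1 - tail μ id x := by
    rw [tail_eq_one_sub_cdf measurable_id]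
    simpa using cdf_nonneg _ x
  rw [tail_maxLaw, maxLevel, sub_le_comm, le_sub_comm, ← rpow_natCast, one_div,
    rpow_inv_le_iff_of_pos (sub_nonneg.2 hp) hx hcard]

lemma maxLaw_eq_map_unitUniform (hμ : ∀ᵐ x ∂μ, 0 ≤ x) :
    maxLaw κ μ = unitUniform.map fun u => tailInv (tail μ id) (maxLevel (Fintype.card κ) u) := by
  have hmax : ∀ᵐ x ∂maxLaw κ μ, 0 ≤ x := by
    rw [maxLaw, ae_map_iff measurable_iSup_apply.aemeasurable measurableSet_Ici]
    filter_upwards [ae_infinitePi_forall hμ] with x hx using Real.iSup_nonneg hx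
  rw [← map_tailInv_unitUniform hmax]
  refine Measure.map_congr ?_
  filter_upwards [ae_mem_Ioo_unitUniform] with u hu using tailInv_maxLaw hu.2.le

end MaxLevel

/-- The upper quantile function `u ↦ (-log (1 - u)) ^ (-1 / α)` of the Fréchet law of index `α`. -/
def frechetQuantile (α u : ℝ) : ℝ := (-log (1 - u)) ^ (-(1 / α))

/-- The Fréchet law of index `α`, with distribution function `x ↦ exp (-x ^ (-α))` on `(0, ∞)`. -/
def frechetLaw (α : ℝ) : Measure ℝ := unitUniform.map (frechetQuantile α)

section Frechet

variable {α u : ℝ}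

lemma measurable_frechetQuantile (α : ℝ) : Measurable (frechetQuantile α) := by
  unfold frechetQuantile
  fun_prop

instance : IsProbabilityMeasure (frechetLaw α) :=
  Measure.isProbabilityMeasure_map (measurable_frechetQuantile α).aemeasurable

lemma le_neg_log_one_sub (hu : u < 1) : u ≤ -log (1 - u) := by
  linarith [log_le_sub_one_of_pos (sub_pos.2 hu)]

lemma frechetQuantile_pos (hu : u ∈ Ioo (0 : ℝ) 1) : 0 < frechetQuantile α u :=
  rpow_pos_of_pos (hu.1.trans_le (le_neg_log_one_sub hu.2)) _

lemma frechetQuantile_le (hα : 0 < α) (hu : u ∈ Ioo (0 : ℝ) 1) :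
    frechetQuantile α u ≤ u ^ (-(1 / α)) :=
  rpow_le_rpow_of_nonpos hu.1 (le_neg_log_one_sub hu.2) (neg_nonpos.2 (by positivity))

lemma neg_one_lt_neg_one_div (hα : 1 < α) : -1 < -(1 / α) :=
  neg_lt_neg ((div_lt_one (by linarith)).2 hα)

lemma integrable_frechetQuantile (hα : 1 < α) : Integrable (frechetQuantile α) unitUniform := by
  refine (integrable_rpow_unitUniform (neg_one_lt_neg_one_div hα)).mono'
    (measurable_frechetQuantile α).aestronglyMeasurable ?_
  filter_upwards [ae_mem_Ioo_unitUniform] with u hu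
  rw [norm_of_nonneg (frechetQuantile_pos hu).le]
  exact frechetQuantile_le (by linarith) hu

end Frechet

namespace IsRegVarTail

variable {T : ℝ → ℝ} {α : ℝ}

lemma tendsto_tailInv_maxLevel_div (hT : IsRegVarTail T α) (hα : 0 < α) {ι : Type*} {F : Filter ι}
    {n : ι → ℕ} {p : ι → ℝ} {θ u : ℝ} (hθ : 0 < θ) (hn : Tendsto n F atTop)
    (hp : Tendsto p F (nhdsWithin 0 (Ioi 0))) (hnp : Tendsto (fun i => n i * p i) F (nhds θ))
    (hu : u ∈ Ioo (0 : ℝ) 1) :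
    Tendsto (fun i => tailInv T (maxLevel (n i) u) / tailInv T (p i)) F
      (nhds (θ ^ (1 / α) * frechetQuantile α u)) := by
  have hlog : 0 < -log (1 - u) := hu.1.trans_le (le_neg_log_one_sub hu.2)
  have hratio : Tendsto (fun i => maxLevel (n i) u / p i) F (nhds (-log (1 - u) / θ)) := by
    refine (((tendsto_mul_maxLevel hu.2).comp hn).div hnp hθ.ne').congr' ?_
    filter_upwards [hn.eventually_gt_atTop 0] with i hi
    exact mul_div_mul_left _ _ (Nat.cast_ne_zero.2 hi.ne')
  have hlim : θ ^ (1 / α) * frechetQuantile α u = (-log (1 - u) / θ) ^ (-(1 / α)) := by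
    rw [frechetQuantile, div_rpow hlog.le hθ.le, rpow_neg hθ.le, div_inv_eq_mul, mul_comm]
  rw [hlim]
  exact hT.tendsto_tailInv_div_tailInv hα hp (by positivity) hratio

lemma eventually_tailInv_maxLevel_le (hT : IsRegVarTail T α) {β B : ℝ} (hβ : 0 < β) (hβα : β < α)
    (hB : 1 ≤ B) :
    ∀ᶠ p in nhdsWithin 0 (Ioi 0), ∀ n : ℕ, 0 < n → n * p ≤ B → ∀ u ∈ Ioo (0 : ℝ) 1,
      tailInv T (maxLevel n u) ≤ 2 * (u / B) ^ (-(1 / β)) * tailInv T p := by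
  obtain ⟨x₀, -, hpotter⟩ := hT.exists_apply_mul_le hβ.le hβα
  filter_upwards [hT.tendsto_tailInv.eventually_ge_atTop x₀, self_mem_nhdsWithin]
    with p hx₀ (hp : 0 < p) n hn hnp u hu
  have hu0 : 0 < u := hu.1
  have hn0 : (0 : ℝ) < n := by exact_mod_cast hn
  have hz : 1 ≤ (u / B) ^ (-(1 / β)) :=
    one_le_rpow_of_pos_of_le_one_of_nonpos (by positivity)
      ((div_le_one (by positivity)).2 (hu.2.le.trans hB)) (neg_nonpos.2 (by positivity))
  have hQ := tailInv_nonneg T p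
  rw [hT.tailInv_le_iff (maxLevel_pos hn hu) (by positivity)]
  calc T (2 * (u / B) ^ (-(1 / β)) * tailInv T p)
      ≤ (2 * (u / B) ^ (-(1 / β)) / 2) ^ (-β) * T (tailInv T p) :=
        hpotter _ hx₀ _ (by linarith)
    _ = u / B * T (tailInv T p) := by
        rw [mul_div_cancel_left₀ _ two_ne_zero, ← rpow_mul (by positivity), neg_mul_neg,
          one_div_mul_cancel hβ.ne', rpow_one]
    _ ≤ u / B * p := by gcongr; exact hT.apply_tailInv_le hp
    _ ≤ u / n := by
        rw [div_mul_eq_mul_div, div_le_div_iff₀ (by positivity) hn0, mul_assoc, mul_comm p]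
        gcongr
    _ ≤ maxLevel n u := div_le_maxLevel hn hu.2.le

lemma tendsto_meanDelayedMax_maxLaw_div {μ : Measure ℝ} [IsProbabilityMeasure μ]
    (hT : IsRegVarTail (tail μ id) α) (hα : 1 < α) (hμ : ∀ᵐ x ∂μ, 0 ≤ x) {ι : Type*}
    {F : Filter ι} [F.IsCountablyGenerated] {κ : ι → Type*} [∀ i, Fintype (κ i)] {p : ι → ℝ}
    {θ : ℝ} (hθ : 0 < θ) (hκ : Tendsto (fun i => Fintype.card (κ i)) F atTop)
    (hp : Tendsto p F (nhdsWithin 0 (Ioi 0)))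
    (hκp : Tendsto (fun i => Fintype.card (κ i) * p i) F (nhds θ)) (d k : ℕ) :
    Tendsto (fun i => meanDelayedMax d k (maxLaw (κ i) μ) / tailInv (tail μ id) (p i)) F
      (nhds (θ ^ (1 / α) * meanDelayedMax d k (frechetLaw α))) := by
  set Q := tailInv (tail μ id)
  set β : ℝ := (1 + α) / 2 with hβ_def
  have hβ : 1 < β := by linarith
  have hβα : β < α := by linarith
  have hQ : ∀ i, Measurable fun u => Q (maxLevel (Fintype.card (κ i)) u) := fun i =>
    hT.measurable_tailInv.comp (measurable_maxLevel _)
  have hdom : Integrable (fun u => 2 * (u / (θ + 1)) ^ (-(1 / β))) unitUniform := by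
    have hpow := integrable_rpow_unitUniform (neg_one_lt_neg_one_div hβ)
    refine ((hpow.div_const ((θ + 1) ^ (-(1 / β)))).congr ?_).const_mul 2
    filter_upwards [ae_mem_Ioo_unitUniform] with u hu
    exact (div_rpow hu.1.le (by positivity) _).symm
  have hlim := tendsto_meanDelayedMax_map_of_dominated (ν := unitUniform)
    (f := fun i u => (Q (p i))⁻¹ * Q (maxLevel (Fintype.card (κ i)) u))
    (fun i => (hQ i).const_mul _) ((measurable_frechetQuantile α).const_mul (θ ^ (1 / α)))
    hdom (F := F) ?_ ?_ d k
  · rw [meanDelayedMax_map_const_mul (measurable_frechetQuantile α) (by positivity)] at hlim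
    refine hlim.congr' ?_
    filter_upwards [hκ.eventually_gt_atTop 0] with i hi
    have := Fintype.card_pos_iff.1 hi
    rw [meanDelayedMax_map_const_mul (hQ i) (inv_nonneg.2 (tailInv_nonneg _ _)),
      maxLaw_eq_map_unitUniform hμ, div_eq_inv_mul]
  · filter_upwards [hκ.eventually_gt_atTop 0, hκp.eventually_le_const (lt_add_one θ),
      hp.eventually (hT.eventually_tailInv_maxLevel_le (B := θ + 1) (by linarith) hβα
        (by linarith)),
      hp.eventually (hT.tendsto_tailInv.eventually_gt_atTop 0)] with i hκi hκpi hle hQi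
    filter_upwards [ae_mem_Ioo_unitUniform] with u hu
    rw [inv_mul_le_iff₀ hQi, mul_comm]
    exact hle _ hκi hκpi u hu
  · filter_upwards [ae_mem_Ioo_unitUniform] with u hu
    simpa only [div_eq_inv_mul] using
      hT.tendsto_tailInv_maxLevel_div (by linarith) hθ hκ hp hκp hu

end IsRegVarTail

/-! ### The limiting constant -/

lemma delayedMax_le_add_sum {a : ℝ} (ha : 0 ≤ a) {d k : ℕ} (hk : k ≤ d + 1) (x : ℕ → ℝ) :
    delayedMax d x k ≤ a + ∑ i ∈ Finset.range k, max (x i - a) 0 := by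
  have hexcess : ∀ i ∈ Finset.range k, 0 ≤ max (x i - a) 0 := fun i _ => le_max_right _ _
  refine delayedMax_le_of_le (add_nonneg ha (Finset.sum_nonneg hexcess)) (fun i hi => ?_) hk
  linarith [le_max_left (x i - a) 0, Finset.single_le_sum hexcess (Finset.mem_range.2 hi)]

section Mean

variable {μ : Measure ℝ} [IsProbabilityMeasure μ]

lemma meanDelayedMax_self_le (hμ : Integrable id μ) {a : ℝ} (ha : 0 ≤ a) (d : ℕ) :
    meanDelayedMax d d μ ≤ a + d * ∫ x, max (x - a) 0 ∂μ := by
  have hM := isIID_infinitePi ℕ μ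
  have hexcess : Integrable (fun x => max (x - a) 0) μ := (hμ.sub (integrable_const a)).pos_part
  have hsum := integrable_finsetSum (Finset.range d) fun i _ =>
    integrable_eval_infinitePi (ι := ℕ) hexcess i
  have heval : ∀ i : ℕ, ∫ x : ℕ → ℝ, max (x i - a) 0 ∂Measure.infinitePi (fun _ => μ) =
      ∫ x, max (x - a) 0 ∂μ := fun i => by
    conv_rhs => rw [← hM.map_eq i, integral_map (hM.measurable i).aemeasurable (by fun_prop)]
  calc meanDelayedMax d d μ
      ≤ ∫ x : ℕ → ℝ, (a + ∑ i ∈ Finset.range d, max (x i - a) 0)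
          ∂Measure.infinitePi fun _ : ℕ => μ :=
        integral_mono (hM.integrable_delayedMax hμ d d) ((integrable_const a).add hsum) fun x =>
          delayedMax_le_add_sum ha d.le_succ x
    _ = a + d * ∫ x, max (x - a) 0 ∂μ := by
        rw [integral_add (integrable_const a) hsum, integral_finsetSum _ fun i _ =>
          integrable_eval_infinitePi hexcess i]
        simp [heval]

lemma meanDelayedMax_le (hμ : Integrable id μ) {a : ℝ} (ha : 0 ≤ a) {d : ℕ} (hd : 0 < d) (k : ℕ) :
    meanDelayedMax d k μ ≤ (k + d) / d * (a + d * ∫ x, max (x - a) 0 ∂μ) := by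
  have : 0 ≤ ∫ x, max (x - a) 0 ∂μ := integral_nonneg fun x => le_max_right _ _
  have hcover : k ≤ (k / d + 1) * d := by
    rw [add_one_mul]
    exact (Nat.lt_div_mul_add hd).le
  have hcount : ((k / d + 1 : ℕ) : ℝ) ≤ (k + d) / d := by
    rw [add_div, div_self (by positivity), Nat.cast_add_one]
    gcongr
    exact Nat.cast_div_le
  calc meanDelayedMax d k μ
      ≤ meanDelayedMax d ((k / d + 1) * d) μ := meanDelayedMax_mono hμ d hcover
    _ ≤ (k / d + 1 : ℕ) * meanDelayedMax d d μ := meanDelayedMax_mul_le hμ d d _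
    _ ≤ (k / d + 1 : ℕ) * (a + d * ∫ x, max (x - a) 0 ∂μ) := by
        gcongr
        exact meanDelayedMax_self_le hμ ha d
    _ ≤ (k + d) / d * (a + d * ∫ x, max (x - a) 0 ∂μ) := by gcongr

lemma meanDelayedMax_one (d : ℕ) : meanDelayedMax d 1 μ = ∫ x, max x 0 ∂μ := by
  have hM := isIID_infinitePi ℕ μ
  conv_rhs => rw [← hM.map_eq 0, integral_map (hM.measurable 0).aemeasurable (by fun_prop)]
  simp [meanDelayedMax, delayedMax_succ, max_comm]

end Mean

section FrechetBound

variable {α : ℝ}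

lemma integral_frechetLaw {f : ℝ → ℝ} (hf : Measurable f) :
    ∫ x, f x ∂frechetLaw α = ∫ u, f (frechetQuantile α u) ∂unitUniform :=
  integral_map (measurable_frechetQuantile α).aemeasurable hf.aestronglyMeasurable

lemma integrable_id_frechetLaw (hα : 1 < α) : Integrable id (frechetLaw α) :=
  (integrable_map_measure aestronglyMeasurable_id (measurable_frechetQuantile α).aemeasurable).2
    (integrable_frechetQuantile hα)

lemma integral_indicator_rpow_unitUniform {s t : ℝ} (hs : -1 < s) (ht : 0 ≤ t) (ht1 : t ≤ 1) :
    ∫ u, (Ioo 0 t).indicator (fun u => u ^ s) u ∂unitUniform = t ^ (s + 1) / (s + 1) := by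
  rw [unitUniform, setIntegral_indicator measurableSet_Ioo, Ioo_inter_Ioo, sup_idem,
    inf_eq_right.2 ht1, ← integral_Ioc_eq_integral_Ioo, ← intervalIntegral.integral_of_le ht,
    integral_rpow (.inl hs), zero_rpow (by linarith), sub_zero]

lemma integral_max_sub_frechetLaw_le (hα : 1 < α) {c : ℝ} (hc : 1 ≤ c) :
    c * ∫ x, max (x - c ^ (1 / α)) 0 ∂frechetLaw α ≤ c ^ (1 / α) * (1 - 1 / α)⁻¹ := by
  have hc0 : 0 < c := by linarith
  have hs := neg_one_lt_neg_one_div hα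
  have hinv : 0 < 1 / α := by positivity
  have hexcess : ∀ u ∈ Ioo (0 : ℝ) 1, max (frechetQuantile α u - c ^ (1 / α)) 0 ≤
      (Ioo 0 c⁻¹).indicator (fun u => u ^ (-(1 / α))) u := fun u hu => by
    have hle := frechetQuantile_le (α := α) (by linarith) hu
    by_cases huc : u < c⁻¹
    · rw [indicator_of_mem (show u ∈ Ioo 0 c⁻¹ from ⟨hu.1, huc⟩)]
      exact max_le (by linarith [rpow_nonneg hc0.le (1 / α)]) (rpow_nonneg hu.1.le _)
    · have hpow : u ^ (-(1 / α)) ≤ c⁻¹ ^ (-(1 / α)) :=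
        rpow_le_rpow_of_nonpos (inv_pos.2 hc0) (not_lt.1 huc) (by linarith)
      rw [inv_rpow hc0.le, rpow_neg hc0.le, inv_inv] at hpow
      rw [indicator_of_notMem fun h => huc h.2]
      exact max_le (by linarith) le_rfl
  calc c * ∫ x, max (x - c ^ (1 / α)) 0 ∂frechetLaw α
      ≤ c * ∫ u, (Ioo 0 c⁻¹).indicator (fun u => u ^ (-(1 / α))) u ∂unitUniform := by
        rw [integral_frechetLaw (by fun_prop)]
        refine mul_le_mul_of_nonneg_left (integral_mono_ae
          ((integrable_frechetQuantile hα).sub (integrable_const _)).pos_part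
          ((integrable_rpow_unitUniform hs).indicator measurableSet_Ioo) ?_) hc0.le
        filter_upwards [ae_mem_Ioo_unitUniform] with u hu using hexcess u hu
    _ = c ^ (1 / α) * (1 - 1 / α)⁻¹ := by
        rw [integral_indicator_rpow_unitUniform hs (inv_nonneg.2 hc0.le) (inv_le_one_of_one_le₀ hc),
          inv_rpow hc0.le, rpow_add hc0, rpow_neg hc0.le, rpow_one, neg_add_eq_sub]
        field_simp

lemma meanDelayedMax_frechetLaw_le (hα : 1 < α) {d : ℕ} (hd : 0 < d) (k : ℕ) :
    meanDelayedMax d k (frechetLaw α) ≤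
      (k + d) / d * (d ^ (1 / α) * (1 + (1 - 1 / α)⁻¹)) := by
  refine (meanDelayedMax_le (integrable_id_frechetLaw hα) (rpow_nonneg d.cast_nonneg (1 / α))
    hd k).trans (mul_le_mul_of_nonneg_left ?_ (by positivity))
  rw [mul_one_add]
  exact add_le_add le_rfl (integral_max_sub_frechetLaw_le hα (Nat.one_le_cast.2 hd))

lemma meanDelayedMax_one_frechetLaw_pos (hα : 1 < α) (d : ℕ) :
    0 < meanDelayedMax d 1 (frechetLaw α) := by
  have hnonneg : 0 ≤ᵐ[unitUniform] frechetQuantile α := by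
    filter_upwards [ae_mem_Ioo_unitUniform] with u hu using (frechetQuantile_pos hu).le
  refine (meanDelayedMax_nonneg d 1 _).lt_of_ne' fun hzero => ?_
  have hmean : ∫ u, frechetQuantile α u ∂unitUniform = 0 := by
    rw [← hzero, meanDelayedMax_one, integral_frechetLaw (by fun_prop)]
    refine integral_congr_ae ?_
    filter_upwards [hnonneg] with u hu using (max_eq_left hu).symm
  rw [integral_eq_zero_iff_of_nonneg_ae hnonneg (integrable_frechetQuantile hα)] at hmean
  obtain ⟨u, hu, hu0⟩ := (ae_mem_Ioo_unitUniform.and hmean).exists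
  exact (frechetQuantile_pos hu).ne' hu0

end FrechetBound

/-- The limit, as `N → ∞`, of the lower bound on `v_N log₂ N / c_N` obtained by chaining the largest
jumps of blocks of about `log₂ N / (m + 1)` generations, over windows of `k + 1` blocks. -/
def chainSpeed (α : ℝ) (m k : ℕ) : ℝ :=
  (m + 1) ^ (1 - 1 / α) * meanDelayedMax (m + 2) (k + 1) (frechetLaw α) / (k + m + 3)

/-- The constant `ρ_α`. -/
def limitSpeed (α : ℝ) : ℝ := ⨆ p : ℕ × ℕ, chainSpeed α p.1 p.2

section LimitSpeed

variable {α : ℝ}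

lemma chainSpeed_le (hα : 1 < α) (m k : ℕ) : chainSpeed α m k ≤ 1 + (1 - 1 / α)⁻¹ := by
  have hinv : 1 / α < 1 := (div_lt_one (by linarith)).2 hα
  have hmean := meanDelayedMax_nonneg (m + 2) (k + 1) (frechetLaw α)
  have hm : (0 : ℝ) < m + 2 := by positivity
  rw [chainSpeed, div_le_iff₀ (by positivity)]
  calc (m + 1) ^ (1 - 1 / α) * meanDelayedMax (m + 2) (k + 1) (frechetLaw α)
      ≤ (m + 2) ^ (1 - 1 / α) * meanDelayedMax (m + 2) (k + 1) (frechetLaw α) := by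
        gcongr
        norm_num
    _ ≤ (m + 2) ^ (1 - 1 / α) * (((k + 1 : ℕ) + (m + 2 : ℕ)) / (m + 2 : ℕ) *
          ((m + 2 : ℕ) ^ (1 / α) * (1 + (1 - 1 / α)⁻¹))) := by
        gcongr
        exact meanDelayedMax_frechetLaw_le hα (by positivity) (k + 1)
    _ = (1 + (1 - 1 / α)⁻¹) * (k + m + 3) := by
        push_cast
        rw [rpow_sub hm, rpow_one]
        have hpow : ((m : ℝ) + 2) ^ (1 / α) ≠ 0 := by positivity
        field_simp
        ring

lemma chainSpeed_le_limitSpeed (hα : 1 < α) (m k : ℕ) : chainSpeed α m k ≤ limitSpeed α :=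
  le_ciSup (f := fun p : ℕ × ℕ => chainSpeed α p.1 p.2)
    ⟨_, forall_mem_range.2 fun p => chainSpeed_le hα p.1 p.2⟩ (m, k)

lemma limitSpeed_pos (hα : 1 < α) : 0 < limitSpeed α := by
  refine lt_of_lt_of_le ?_ (chainSpeed_le_limitSpeed hα 0 0)
  have hmean := meanDelayedMax_one_frechetLaw_pos hα (0 + 2)
  rw [chainSpeed]
  positivity

end LimitSpeed

/-! ### Convergence of the speed -/

/-- Number of generations in a block, about `log₂ N / m`. -/
def blockLength (m N : ℕ) : ℕ := Nat.log 2 N / m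

section Scales

variable {m N : ℕ}

lemma tendsto_logb_natCast_atTop : Tendsto (fun N : ℕ => logb 2 N) atTop atTop :=
  (tendsto_logb_atTop one_lt_two).comp tendsto_natCast_atTop_atTop

lemma tendsto_inv_two_mul_mul_logb :
    Tendsto (fun N : ℕ => (2 * N * logb 2 N)⁻¹) atTop (nhdsWithin 0 (Ioi 0)) :=
  tendsto_inv_atTop_nhdsGT_zero.comp
    ((tendsto_natCast_atTop_atTop.const_mul_atTop two_pos).atTop_mul_atTop₀
      tendsto_logb_natCast_atTop)

lemma tendsto_blockLength_div_logb (hm : 0 < m) :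
    Tendsto (fun N : ℕ => blockLength m N / logb 2 N) atTop (nhds (1 / m)) := by
  have hfloor := (tendsto_nat_floor_mul_div_atTop (R := ℝ) (a := 1 / m) (by positivity)).comp
    tendsto_logb_natCast_atTop
  refine hfloor.congr fun N => ?_
  rw [Function.comp_apply, one_div_mul_eq_div, Nat.floor_div_natCast]
  norm_cast

lemma tendsto_blockLength_atTop (hm : 0 < m) : Tendsto (blockLength m) atTop atTop :=
  (Nat.tendsto_div_const_atTop hm.ne').comp <|
    tendsto_atTop_atTop_of_monotone Nat.log_monotone fun n => ⟨2 ^ n, (Nat.log_pow one_lt_two n).ge⟩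

lemma two_pow_mul_blockLength_le (hN : 0 < N) : 2 ^ (m * blockLength m N) ≤ N :=
  (Nat.pow_le_pow_right two_pos (Nat.mul_div_le _ m)).trans (Nat.pow_log_le_self 2 hN.ne')

lemma eventually_le_two_pow_mul_blockLength (hm : 0 < m) :
    ∀ᶠ N in atTop, N ≤ 2 ^ ((m + 1) * blockLength m N) := by
  filter_upwards [(tendsto_blockLength_atTop hm).eventually_ge_atTop m] with N hN
  refine (Nat.lt_pow_succ_log_self one_lt_two N).le.trans (Nat.pow_le_pow_right two_pos ?_)
  have hlog : Nat.log 2 N < blockLength m N * m + m := Nat.lt_div_mul_add hm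
  linarith

end Scales

section CN

variable {μ : Measure ℝ} {α : ℝ}

lemma IsRegVarTail.tendsto_cN (hT : IsRegVarTail (tail μ id) α) :
    Tendsto (cN μ id) atTop atTop :=
  hT.tendsto_tailInv.comp tendsto_inv_two_mul_mul_logb

lemma IsRegVarTail.exists_rpow_le_cN (hT : IsRegVarTail (tail μ id) α) {γ : ℝ} (hγ : 0 < γ)
    (hαγ : α < γ) : ∃ C > 0, ∀ᶠ N : ℕ in atTop, C * (N : ℝ) ^ (1 / γ) ≤ cN μ id N := by
  obtain ⟨C, hC, hle⟩ := hT.exists_rpow_le_tailInv hγ hαγ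
  refine ⟨C, hC, ?_⟩
  filter_upwards [tendsto_inv_two_mul_mul_logb.eventually hle, eventually_gt_atTop 0,
    tendsto_logb_natCast_atTop.eventually_ge_atTop 1] with N hN hN0 hL
  refine le_trans ?_ hN
  rw [inv_rpow (by positivity), rpow_neg (by positivity), inv_inv]
  gcongr
  nlinarith [show (0 : ℝ) < N by exact_mod_cast hN0]

lemma IsRegVarTail.tendsto_rpow_mul_logb_div_cN (hT : IsRegVarTail (tail μ id) α) (hα : 0 < α)
    {s : ℝ} (hs : 0 < s) (hsα : s < 1 / α) :
    Tendsto (fun N : ℕ => (N : ℝ) ^ s * logb 2 N / cN μ id N) atTop (nhds 0) := by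
  obtain ⟨γ, hαγ, hγs⟩ := exists_between ((lt_one_div hs hα).1 hsα)
  have hγ : 0 < γ := hα.trans hαγ
  obtain ⟨C, hC, hle⟩ := hT.exists_rpow_le_cN hγ hαγ
  have hlog : Tendsto (fun N : ℕ => (C * log 2)⁻¹ * (log N / (N : ℝ) ^ (1 / γ - s))) atTop
      (nhds 0) := by
    have hgap : 0 < 1 / γ - s := sub_pos.2 ((lt_one_div hγ hs).1 hγs)
    simpa using (((isLittleO_log_rpow_atTop hgap).tendsto_div_nhds_zero).comp
      tendsto_natCast_atTop_atTop).const_mul (C * log 2)⁻¹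
  refine squeeze_zero' ?_ ?_ hlog
  · filter_upwards [tendsto_logb_natCast_atTop.eventually_ge_atTop 0,
      hT.tendsto_cN.eventually_ge_atTop 0] with N hL hc
    positivity
  · filter_upwards [tendsto_logb_natCast_atTop.eventually_ge_atTop 0, hle,
      eventually_gt_atTop 0] with N hL hc hN
    calc (N : ℝ) ^ s * logb 2 N / cN μ id N ≤ (N : ℝ) ^ s * logb 2 N / (C * (N : ℝ) ^ (1 / γ)) := by
          gcongr
      _ = (C * log 2)⁻¹ * (log N / (N : ℝ) ^ (1 / γ - s)) := by
          rw [rpow_sub (by positivity), logb]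
          field_simp

lemma IsRegVarTail.tendsto_sq_mul_tail_mul_setIntegral [IsFiniteMeasure μ]
    (hT : IsRegVarTail (tail μ id) α) (hα : 1 < α) (hμ : Integrable id μ) {ε : ℝ} (hε : 0 < ε) :
    Tendsto (fun N : ℕ => (N : ℝ) ^ 2 * tail μ id (ε * cN μ id N) *
      (∫ x in Ioi (ε * cN μ id N), x ∂μ) * (logb 2 N / cN μ id N)) atTop (nhds 0) := by
  obtain ⟨C, hC, hle⟩ := hT.exists_setIntegral_Ioi_le hα hμ
  have hratio := (hT.tendsto_apply_mul_tailInv_div hε).comp tendsto_inv_two_mul_mul_logb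
  have hlim : Tendsto (fun N : ℕ => C * ε / 4 *
      (tail μ id (ε * cN μ id N) / (2 * N * logb 2 N)⁻¹) ^ 2 * (logb 2 N)⁻¹) atTop (nhds 0) := by
    have h := ((hratio.pow 2).const_mul (C * ε / 4)).mul
      tendsto_logb_natCast_atTop.inv_tendsto_atTop
    rwa [mul_zero] at h
  have hbig := hT.tendsto_cN.const_mul_atTop hε
  refine squeeze_zero' ?_ ?_ hlim
  · filter_upwards [tendsto_logb_natCast_atTop.eventually_ge_atTop 0,
      hbig.eventually_ge_atTop 0, hT.tendsto_cN.eventually_ge_atTop 0] with N hL ha hc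
    have hint : 0 ≤ ∫ x in Ioi (ε * cN μ id N), x ∂μ :=
      setIntegral_nonneg measurableSet_Ioi fun x hx => ha.trans (le_of_lt hx)
    have htail := hT.nonneg (ε * cN μ id N)
    positivity
  · filter_upwards [tendsto_logb_natCast_atTop.eventually_gt_atTop 0,
      hbig.eventually hle, hT.tendsto_cN.eventually_gt_atTop 0] with N hL hNle hc
    have htail := hT.nonneg (ε * cN μ id N)
    calc _ ≤ (N : ℝ) ^ 2 * tail μ id (ε * cN μ id N) *
            (C * (ε * cN μ id N * tail μ id (ε * cN μ id N))) * (logb 2 N / cN μ id N) := by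
          gcongr
      _ = _ := by
          field_simp
          ring

lemma IsRegVarTail.tendsto_meanDelayedMax_blockLaw_div_cN [IsProbabilityMeasure μ]
    (hT : IsRegVarTail (tail μ id) α) (hα : 1 < α) (hμ : ∀ᵐ x ∂μ, 0 ≤ x) {m : ℕ} (hm : 0 < m)
    (d k : ℕ) :
    Tendsto (fun N : ℕ => meanDelayedMax d k (blockLaw (blockLength m N) N μ) / cN μ id N *
      (logb 2 N / blockLength m N)) atTop
      (nhds ((m : ℝ) ^ (1 - 1 / α) * meanDelayedMax d k (frechetLaw α))) := by
  have hm0 : (0 : ℝ) < m := by exact_mod_cast hm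
  have hratio := tendsto_blockLength_div_logb hm
  have hcard (N : ℕ) : Fintype.card (Fin (blockLength m N) × Fin N × Fin 2) =
      blockLength m N * (N * 2) := by simp
  have hκ : Tendsto (fun N => Fintype.card (Fin (blockLength m N) × Fin N × Fin 2)) atTop
      atTop := by
    refine tendsto_atTop_mono' _ ?_ (tendsto_blockLength_atTop hm)
    filter_upwards [eventually_gt_atTop 0] with N hN
    rw [hcard]
    exact Nat.le_mul_of_pos_right _ (by positivity)
  have hκp : Tendsto (fun N : ℕ => (Fintype.card (Fin (blockLength m N) × Fin N × Fin 2) : ℝ) *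
      (2 * N * logb 2 N)⁻¹) atTop (nhds (1 / m)) := by
    refine hratio.congr' ?_
    filter_upwards [eventually_gt_atTop 0] with N hN
    rw [hcard]
    push_cast
    field_simp
  have hblock := hT.tendsto_meanDelayedMax_maxLaw_div hα hμ (by positivity) hκ
    tendsto_inv_two_mul_mul_logb hκp d k
  have hconst : (m : ℝ) ^ (1 - 1 / α) = (1 / m : ℝ) ^ (1 / α) * (1 / m : ℝ)⁻¹ := by
    rw [rpow_sub hm0, rpow_one, one_div (m : ℝ), inv_inv, inv_rpow hm0.le]
    ring
  rw [hconst, mul_right_comm]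
  exact (hblock.mul (hratio.inv₀ (by positivity))).congr fun N => by rw [inv_div]; rfl

end CN

/-- The counterpart of `chainSpeed` for the upper bound on `v_N log₂ N / c_N`: blocks have about
`log₂ N / (m + 4)` generations, and consecutive windows of `k + 1` blocks are bounded separately. -/
def chainSpeedUpper (α : ℝ) (m k : ℕ) : ℝ :=
  (m + 4) ^ (1 - 1 / α) * meanDelayedMax (m + 2) (k + 1) (frechetLaw α) / (k + 1)

lemma chainSpeedUpper_le {α : ℝ} (hα : 1 < α) (m : ℕ) :
    chainSpeedUpper α m ((m + 1) ^ 2) ≤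
      (1 + 3 * (1 / (m + 1))) * (1 + 2 * (1 / (m + 1))) * chainSpeed α m ((m + 1) ^ 2) := by
  have hinv : 0 < 1 / α := by positivity
  have : 1 / α < 1 := (div_lt_one (by linarith)).2 hα
  have hmean := meanDelayedMax_nonneg (m + 2) ((m + 1) ^ 2 + 1) (frechetLaw α)
  have hpow : ((m : ℝ) + 4) ^ (1 - 1 / α) ≤ (1 + 3 * (1 / (m + 1))) * (m + 1) ^ (1 - 1 / α) := by
    have hfactor : (m : ℝ) + 4 = (1 + 3 * (1 / (m + 1))) * (m + 1) := by
      field_simp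
      ring
    rw [hfactor, mul_rpow (by positivity) (by positivity)]
    gcongr
    refine rpow_le_self_of_one_le (le_add_of_nonneg_right (by positivity)) (by linarith)
  have hwindow : (m + 1 : ℝ) ^ 2 + m + 3 ≤ (1 + 2 * (1 / (m + 1))) * ((m + 1) ^ 2 + 1) := by
    have hexpand : (1 + 2 * (1 / ((m : ℝ) + 1))) * ((m + 1) ^ 2 + 1) =
        (m + 1) ^ 2 + m + 3 + (m + 2 / (m + 1)) := by
      field_simp
      ring
    rw [hexpand]
    exact le_add_of_nonneg_right (by positivity)
  rw [chainSpeedUpper, chainSpeed]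
  push_cast
  rw [mul_div_assoc', div_le_div_iff₀ (by positivity) (by positivity)]
  calc (m + 4 : ℝ) ^ (1 - 1 / α) * meanDelayedMax (m + 2) ((m + 1) ^ 2 + 1) (frechetLaw α) *
        ((m + 1) ^ 2 + m + 3)
      ≤ (1 + 3 * (1 / (m + 1))) * (m + 1) ^ (1 - 1 / α) *
          meanDelayedMax (m + 2) ((m + 1) ^ 2 + 1) (frechetLaw α) *
          ((1 + 2 * (1 / (m + 1))) * ((m + 1) ^ 2 + 1)) := by gcongr
    _ = _ := by ring

lemma exists_chainSpeedUpper_lt {α r : ℝ} (hα : 1 < α) (hr : limitSpeed α < r) :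
    ∃ m k, chainSpeedUpper α m k < r := by
  have hzero := tendsto_one_div_add_atTop_nhds_zero_nat (𝕜 := ℝ)
  have hlim : Tendsto (fun m : ℕ => (1 + 3 * (1 / ((m : ℝ) + 1))) * (1 + 2 * (1 / ((m : ℝ) + 1))) *
      limitSpeed α) atTop (nhds (limitSpeed α)) := by
    simpa using (((hzero.const_mul 3).const_add 1).mul
      ((hzero.const_mul 2).const_add 1)).mul_const (limitSpeed α)
  obtain ⟨m, hm⟩ := (hlim.eventually_lt_const hr).exists
  refine ⟨m, (m + 1) ^ 2, (chainSpeedUpper_le hα m).trans_lt (lt_of_le_of_lt ?_ hm)⟩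
  gcongr
  exact chainSpeed_le_limitSpeed hα m _

section Speed

variable {Ω : Type*} [MeasurableSpace Ω] {P : Measure Ω} [IsProbabilityMeasure P] {μ : Measure ℝ}
  [IsProbabilityMeasure μ]

lemma IsJumpArray.speed_mul_div_le {N l d k : ℕ} {J : Ω → JumpArray N} {v s δ b : ℝ}
    (hJ : IsJumpArray P μ J) (hμ : Integrable id μ) (hl : 0 < l) (hk : 0 < k) (hN : 1 < N)
    (hdl : 2 ^ ((d + 1) * l) ≤ N) (hδ : 0 < δ) (hb : 0 < b)
    (hv : ∀ᵐ ω ∂P, Tendsto (fun n : ℕ => brwMax N (J ω) n / n) atTop (nhds v)) :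
    v * logb 2 N / b ≤ meanDelayedMax d k (blockLaw l N μ) / b * (logb 2 N / l) / k +
      (δ + (N : ℝ) ^ s * logb 2 N / b * ∫ x, x ∂μ) +
      4 * ((N : ℝ) ^ 2 * tail μ id (s * δ * b) * (∫ x in Ioi (s * δ * b), x ∂μ) *
        (logb 2 N / b)) := by
  have : NeZero N := ⟨by lia⟩
  have hL : 0 < logb 2 N := logb_pos one_lt_two (by exact_mod_cast hN)
  have : 0 < log 2 := log_pos one_lt_two
  have : 0 ≤ ∫ x in Ioi (s * δ * b), x ∂μ :=
    integral_nonneg_of_ae (ae_restrict_of_ae hJ.ae_nonneg)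
  have hexp : exp (log 2 * logb 2 N / (δ * b) * (s * δ * b)) = (N : ℝ) ^ s := by
    rw [rpow_def_of_pos (by positivity), logb]
    congr 1
    field_simp
  have hspeed := hJ.speed_le hμ hl hk d (s * δ * b) (c := log 2 * logb 2 N / (δ * b))
    (by positivity) hv
  rw [hexp, show μ.real (Ioi (s * δ * b)) = tail μ id (s * δ * b) from rfl] at hspeed
  have : 0 ≤ tail μ id (s * δ * b) := ENNReal.toReal_nonneg
  calc v * logb 2 N / b = v * (logb 2 N / b) := mul_div_assoc _ _ _
    _ ≤ (meanDelayedMax d k (blockLaw l N μ) / (k * l) +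
          (log 2 / (log 2 * logb 2 N / (δ * b)) + (N : ℝ) ^ s * ∫ x, x ∂μ) +
          4 * N * tail μ id (s * δ * b) * N * ∫ x in Ioi (s * δ * b), x ∂μ) *
          (logb 2 N / b) := by
        gcongr
        refine hspeed.trans ?_
        gcongr
        exact_mod_cast hdl
    _ = _ := by
        field_simp

variable {J : (N : ℕ) → Ω → JumpArray N} {v : ℕ → ℝ} {α r : ℝ} {m k : ℕ}

lemma eventually_lt_speed (hα : 1 < α) (hT : IsRegVarTail (tail μ id) α) (hμ : Integrable id μ)
    (hJ : ∀ N, IsJumpArray P μ (J N))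
    (hv : ∀ N : ℕ, 1 ≤ N →
      ∀ᵐ ω ∂P, Tendsto (fun n : ℕ => brwMax N (J N ω) n / n) atTop (nhds (v N)))
    (hr : r < chainSpeed α m k) : ∀ᶠ N : ℕ in atTop, r < v N * logb 2 N / cN μ id N := by
  have hlim := (hT.tendsto_meanDelayedMax_blockLaw_div_cN hα (hJ 1).ae_nonneg m.succ_pos (m + 2)
    (k + 1)).div_const ((k : ℝ) + m + 3)
  rw [Nat.cast_succ, ← chainSpeed] at hlim
  filter_upwards [hlim.eventually_const_lt hr,
    (tendsto_blockLength_atTop m.succ_pos).eventually_gt_atTop 0, eventually_gt_atTop 0,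
    eventually_le_two_pow_mul_blockLength m.succ_pos,
    tendsto_logb_natCast_atTop.eventually_gt_atTop 0,
    hT.tendsto_cN.eventually_gt_atTop 0] with N hrN hl hN hpow hL hc
  have : NeZero N := ⟨hN.ne'⟩
  have hspeed := (hJ N).meanDelayedMax_le_speed hμ hl k.succ_pos hpow (hv N hN)
  refine hrN.trans_le ?_
  calc meanDelayedMax (m + 2) (k + 1) (blockLaw (blockLength (m + 1) N) N μ) / cN μ id N *
        (logb 2 N / blockLength (m + 1) N) / (k + m + 3)
      ≤ v N * (blockLength (m + 1) N * ((k + 1 : ℕ) + (m + 2 : ℕ))) / cN μ id N *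
        (logb 2 N / blockLength (m + 1) N) / (k + m + 3) := by
        gcongr
    _ = v N * logb 2 N / cN μ id N := by
        push_cast
        field_simp
        ring

lemma eventually_speed_lt (hα : 1 < α) (hT : IsRegVarTail (tail μ id) α) (hμ : Integrable id μ)
    (hJ : ∀ N, IsJumpArray P μ (J N))
    (hv : ∀ N : ℕ, 1 ≤ N →
      ∀ᵐ ω ∂P, Tendsto (fun n : ℕ => brwMax N (J N ω) n / n) atTop (nhds (v N)))
    (hr : chainSpeedUpper α m k < r) : ∀ᶠ N : ℕ in atTop, v N * logb 2 N / cN μ id N < r := by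
  obtain ⟨t, htm, htr⟩ := exists_between hr
  have hδ : 0 < r - t := sub_pos.2 htr
  obtain ⟨s, hs, hsα⟩ := exists_between (show 0 < 1 / α by positivity)
  have hblock := (hT.tendsto_meanDelayedMax_blockLaw_div_cN hα (hJ 1).ae_nonneg
    (m := m + 4) (by lia) (m + 2) (k + 1)).div_const ((k + 1 : ℕ) : ℝ)
  have hsmall := (hT.tendsto_rpow_mul_logb_div_cN (by linarith) hs hsα).mul_const (∫ x, x ∂μ)
  have hlarge := (hT.tendsto_sq_mul_tail_mul_setIntegral hα hμ (mul_pos hs hδ)).const_mul 4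
  have hlim := (hblock.add (hsmall.const_add (r - t))).add hlarge
  push_cast at hlim
  rw [← chainSpeedUpper] at hlim
  filter_upwards [hlim.eventually_lt_const (u := r) (by linarith),
    (tendsto_blockLength_atTop (m := m + 4) (by lia)).eventually_gt_atTop 0,
    eventually_gt_atTop 1, hT.tendsto_cN.eventually_gt_atTop 0] with N hN hl hN1 hc
  refine lt_of_le_of_lt ?_ hN
  have hpow : 2 ^ ((m + 2 + 1) * blockLength (m + 4) N) ≤ N :=
    (Nat.pow_le_pow_right two_pos (Nat.mul_le_mul_right _ (by lia))).trans
      (two_pow_mul_blockLength_le (m := m + 4) (by lia))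
  exact_mod_cast (hJ N).speed_mul_div_le hμ hl k.succ_pos hN1 hpow hδ hc (hv N hN1.le)

end Speed

/-- for `α > 1` there is a constant `ρ_α ∈ (0,∞)`, depending only on `α`,
such that for every `N`-BRW with displacement tail regularly varying with index `α`
(so that `E[X] < ∞` and the speed `v_N` exists), `v_N log₂ N / c_N → ρ_α` as `N → ∞`,
i.e. `v_N ~ ρ_α c_N / log₂ N`. -/
theorem stmt_18 (α : ℝ) (hα : 1 < α) :
    ∃ ρ : ℝ, 0 < ρ ∧
      ∀ (Ω : Type) [MeasurableSpace Ω] (P : Measure Ω) [IsProbabilityMeasure P]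
        (X : Ω → ℝ), Measurable X → (∀ ω, 0 ≤ X ω) → Integrable X P →
        (∀ l : ℝ, 0 < l →
          Tendsto (fun x => tail P X x / tail P X (l * x)) atTop (nhds (l ^ α))) →
        ∀ ξ : (N : ℕ) → ℕ → Fin N → Fin 2 → Ω → ℝ,
        (∀ N n i j, Measurable (ξ N n i j)) →
        (∀ N n i j ω, 0 ≤ ξ N n i j ω) →
        (∀ N n i j, Measure.map (ξ N n i j) P = Measure.map X P) →
        (∀ N, iIndepFun
          (fun p : ℕ × Fin N × Fin 2 => ξ N p.1 p.2.1 p.2.2) P) →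
        ∀ v : ℕ → ℝ,
        (∀ N : ℕ, 1 ≤ N →
          (∀ᵐ ω ∂P, Tendsto
            (fun n : ℕ => brwMax N (fun k i j => ξ N k i j ω) n / n) atTop (nhds (v N))) ∧
          (∀ᵐ ω ∂P, Tendsto
            (fun n : ℕ => brwMin N (fun k i j => ξ N k i j ω) n / n) atTop (nhds (v N)))) →
        Tendsto (fun N : ℕ => v N * Real.logb 2 N / cN P X N) atTop (nhds ρ) := by
  refine ⟨limitSpeed α, limitSpeed_pos hα, ?_⟩
  intro Ω _ P _ X hX _ hXint hreg ξ hξ hξ0 hlaw hindep v hv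
  have := Measure.isProbabilityMeasure_map (μ := P) hX.aemeasurable
  have hμ : Integrable id (P.map X) :=
    (integrable_map_measure aestronglyMeasurable_id hX.aemeasurable).2 hXint
  have hT : IsRegVarTail (tail (P.map X) id) α :=
    { toIsTailFunction := isTailFunction_tail measurable_id
      tendsto_div := tail_eq_tail_map (P := P) hX ▸ hreg }
  have hJ (N : ℕ) : IsJumpArray P (P.map X) fun ω k i j => ξ N k i j ω :=
    ⟨fun ω n i j => hξ0 N n i j ω, ⟨fun p => hξ N _ _ _, hindep N, fun p => hlaw N _ _ _⟩⟩
  have hspeed (N : ℕ) (hN : 1 ≤ N) := (hv N hN).1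
  have hcN : cN P X = cN (P.map X) id := by
    ext N
    simp only [cN, hinv, tail_eq_tail_map hX]
  rw [hcN, tendsto_order]
  refine ⟨fun r hr => ?_, fun r hr => ?_⟩
  · obtain ⟨p, hp⟩ := exists_lt_of_lt_ciSup hr
    exact eventually_lt_speed hα hT hμ hJ hspeed hp
  · obtain ⟨m, k, hmk⟩ := exists_chainSpeedUpper_lt hα hr
    exact eventually_speed_lt hα hT hμ hJ hspeed hmk

end
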